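/- Extended double shuffle relations for non-strict multiple zeta values: for all w1 ∈ H^1 and w2 ∈ H^0 one has Z̄^{*̄}(w1 ш̄ w2 − w1 *̄ w2) = 0 and Z̄^{ш̄}(w1 ш̄ w2 − w1 *̄ w2) = 0, where Z̄^{*̄} : (H^1, *̄) → ℝ[T] and Z̄^{ш̄} : (H^1, ш̄) → ℝ[T] are the unique ℚ-algebra homomorphisms extending Z̄ and sending y to T. -/

import Mathlib

open scoped BigOperators

/-- The two-letter alphabet {x, y}. -/
inductive Letter : Type
  | x : Letter
  | y : Letter
deriving DecidableEq

/-- `H = ℚ⟨x,y⟩`, the noncommutative polynomial ring over ℚ in two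
indeterminates, realized as the monoid algebra of the free monoid on `{x,y}`. -/
abbrev H : Type := MonoidAlgebra ℚ (FreeMonoid Letter)

namespace H

/-- The monomial (word) of `H` corresponding to an element of the free monoid. -/
noncomputable def word (w : FreeMonoid Letter) : H := MonoidAlgebra.single w 1

/-- The generator `x`. -/
noncomputable def X : H := word (FreeMonoid.of Letter.x)

/-- The generator `y`. -/
noncomputable def Y : H := word (FreeMonoid.of Letter.y)

/-- The word `z_k = x^{k-1} y` (for `k ≥ 1`). -/
def zW (k : ℕ) : FreeMonoid Letter :=
  FreeMonoid.ofList (List.replicate (k - 1) Letter.x ++ [Letter.y])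

/-- `z_k = x^{k-1} y` as an element of `H`. -/
noncomputable def z (k : ℕ) : H := word (zW k)

/-- A list `[k₁,…,kₙ]` gives the word `z_{k₁} z_{k₂} ⋯ z_{kₙ}`. -/
def zListW (ks : List ℕ) : FreeMonoid Letter :=
  FreeMonoid.ofList (ks.flatMap fun k => List.replicate (k - 1) Letter.x ++ [Letter.y])

/-- `H¹ = ℚ + Hy` as a ℚ-submodule of `H`. -/
noncomputable def H1 : Submodule ℚ H :=
  LinearMap.range (LinearMap.mulRight ℚ Y) ⊔ Submodule.span ℚ {1}

/-- `H⁰ = ℚ + xHy` as a ℚ-submodule of `H`. -/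
noncomputable def H0 : Submodule ℚ H :=
  LinearMap.range ((LinearMap.mulRight ℚ Y).comp (LinearMap.mulLeft ℚ X)) ⊔
    Submodule.span ℚ {1}

/-- Parse a word of `H¹` into the exponent list of its `z`-decomposition:
`z_{k₁}⋯z_{kₙ} ↦ [k₁,…,kₙ]` (auxiliary accumulator version). -/
def toZAux : List Letter → ℕ → List ℕ
  | [], _ => []
  | Letter.x :: r, n => toZAux r (n + 1)
  | Letter.y :: r, n => (n + 1) :: toZAux r 0

/-- The `z`-decomposition of a word of `H¹`. -/
def toZ (w : FreeMonoid Letter) : List ℕ := toZAux (FreeMonoid.toList w) 0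

/-- The harmonic product on words of `H¹` (via `z`-decompositions):
`1 * w = w * 1 = w` and
`z_k w₁ * z_l w₂ = z_k (w₁ * z_l w₂) + z_l (z_k w₁ * w₂) + z_{k+l} (w₁ * w₂)`. -/
noncomputable def harmW : List ℕ → List ℕ → H
  | [], w => word (zListW w)
  | k :: w1, [] => word (zListW (k :: w1))
  | k :: w1, l :: w2 =>
      z k * harmW w1 (l :: w2) + z l * harmW (k :: w1) w2 + z (k + l) * harmW w1 w2
termination_by w1 w2 => w1.length + w2.length
decreasing_by all_goals simp [Nat.lt_succ_iff] <;> omega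

/-- The n-harmonic product on words of `H¹`:
`1 *̄ w = w *̄ 1 = w` and
`z_k w₁ *̄ z_l w₂ = z_k (w₁ *̄ z_l w₂) + z_l (z_k w₁ *̄ w₂) − z_{k+l} (w₁ *̄ w₂)`. -/
noncomputable def nharmW : List ℕ → List ℕ → H
  | [], w => word (zListW w)
  | k :: w1, [] => word (zListW (k :: w1))
  | k :: w1, l :: w2 =>
      z k * nharmW w1 (l :: w2) + z l * nharmW (k :: w1) w2 - z (k + l) * nharmW w1 w2
termination_by w1 w2 => w1.length + w2.length
decreasing_by all_goals simp [Nat.lt_succ_iff] <;> omega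

/-- The harmonic product `*` on `H¹`, extended ℚ-bilinearly. -/
noncomputable def harm (a b : H) : H :=
  Finsupp.sum a.coeff fun w1 c1 =>
    Finsupp.sum b.coeff fun w2 c2 => (c1 * c2) • harmW (toZ w1) (toZ w2)

/-- The n-harmonic product `*̄` on `H¹`, extended ℚ-bilinearly. -/
noncomputable def nharm (a b : H) : H :=
  Finsupp.sum a.coeff fun w1 c1 =>
    Finsupp.sum b.coeff fun w2 c2 => (c1 * c2) • nharmW (toZ w1) (toZ w2)

/-- The letter exchange `τ(x) = y`, `τ(y) = x`. -/
def τ : Letter → Letter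
  | Letter.x => Letter.y
  | Letter.y => Letter.x

/-- `δ(w) = 1` if `w` is the empty word, `0` otherwise. -/
def δ : List Letter → ℚ
  | [] => 1
  | _ :: _ => 0

/-- The shuffle product on words:
`1 ш w = w ш 1 = w` and `u₁w₁ ш u₂w₂ = u₁(w₁ ш u₂w₂) + u₂(u₁w₁ ш w₂)`. -/
noncomputable def shW : List Letter → List Letter → H
  | [], w => word (FreeMonoid.ofList w)
  | u :: w, [] => word (FreeMonoid.ofList (u :: w))
  | u1 :: w1, u2 :: w2 =>
      word (FreeMonoid.of u1) * shW w1 (u2 :: w2) +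
        word (FreeMonoid.of u2) * shW (u1 :: w1) w2
termination_by w1 w2 => w1.length + w2.length
decreasing_by all_goals simp [Nat.lt_succ_iff]

/-- The n-shuffle product on words: `1 ш̄ w = w ш̄ 1 = w` and
`u₁w₁ ш̄ u₂w₂ = u₁(w₁ ш̄ u₂w₂) + u₂(u₁w₁ ш̄ w₂) − δ(w₁)τ(u₁)u₂w₂ − δ(w₂)τ(u₂)u₁w₁`. -/
noncomputable def nshW : List Letter → List Letter → H
  | [], w => word (FreeMonoid.ofList w)
  | u :: w, [] => word (FreeMonoid.ofList (u :: w))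
  | u1 :: w1, u2 :: w2 =>
      word (FreeMonoid.of u1) * nshW w1 (u2 :: w2) +
        word (FreeMonoid.of u2) * nshW (u1 :: w1) w2 -
        δ w1 • word (FreeMonoid.ofList (τ u1 :: u2 :: w2)) -
        δ w2 • word (FreeMonoid.ofList (τ u2 :: u1 :: w1))
termination_by w1 w2 => w1.length + w2.length
decreasing_by all_goals simp [Nat.lt_succ_iff]

/-- The shuffle product `ш` on `H`, extended ℚ-bilinearly. -/
noncomputable def sh (a b : H) : H :=
  Finsupp.sum a.coeff fun w1 c1 =>
    Finsupp.sum b.coeff fun w2 c2 =>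
      (c1 * c2) • shW (FreeMonoid.toList w1) (FreeMonoid.toList w2)

/-- The n-shuffle product `ш̄` on `H`, extended ℚ-bilinearly. -/
noncomputable def nsh (a b : H) : H :=
  Finsupp.sum a.coeff fun w1 c1 =>
    Finsupp.sum b.coeff fun w2 c2 =>
      (c1 * c2) • nshW (FreeMonoid.toList w1) (FreeMonoid.toList w2)

/-- `S₁`: the ℚ-algebra endomorphism of `H` with `S₁(x) = x`, `S₁(y) = x + y`. -/
noncomputable def S1 : H →ₐ[ℚ] H :=
  MonoidAlgebra.lift ℚ H (FreeMonoid Letter)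
    (FreeMonoid.lift fun u => match u with
      | Letter.x => X
      | Letter.y => X + Y)

/-- `S₂`: the ℚ-algebra endomorphism of `H` with `S₂(x) = x`, `S₂(y) = y − x`. -/
noncomputable def S2 : H →ₐ[ℚ] H :=
  MonoidAlgebra.lift ℚ H (FreeMonoid Letter)
    (FreeMonoid.lift fun u => match u with
      | Letter.x => X
      | Letter.y => Y - X)

/-- `S` on a word: `S(1) = 1` and `S(Fy) = S₁(F)y`. -/
noncomputable def SW (w : FreeMonoid Letter) : H :=
  match (FreeMonoid.toList w).getLast? with
  | some Letter.y =>
      S1 (word (FreeMonoid.ofList (FreeMonoid.toList w).dropLast)) * Y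
  | _ => word w

/-- The ℚ-linear map `S : H¹ → H¹` with `S(1) = 1`, `S(Fy) = S₁(F)y`. -/
noncomputable def S (a : H) : H := Finsupp.sum a.coeff fun w c => c • SW w

/-- `S̃` on a word: `S̃(1) = 1` and `S̃(Fy) = S₂(F)y`. -/
noncomputable def StW (w : FreeMonoid Letter) : H :=
  match (FreeMonoid.toList w).getLast? with
  | some Letter.y =>
      S2 (word (FreeMonoid.ofList (FreeMonoid.toList w).dropLast)) * Y
  | _ => word w

/-- The ℚ-linear map `S̃ : H¹ → H¹` with `S̃(1) = 1`, `S̃(Fy) = S₂(F)y`. -/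
noncomputable def St (a : H) : H := Finsupp.sum a.coeff fun w c => c • StW w

/-- The multiple zeta value `ζ(k₁,…,kₙ)`: the sum over strictly decreasing
tuples `m₁ > m₂ > ⋯ > mₙ > 0` of `1/(m₁^{k₁}⋯mₙ^{kₙ})`. -/
noncomputable def mzeta (ks : List ℕ) : ℝ :=
  ∑' m : {f : Fin ks.length → ℕ // (∀ i, 0 < f i) ∧
      ∀ i j : Fin ks.length, i < j → f j < f i},
    ∏ i : Fin ks.length, ((m.1 i : ℝ) ^ ks.get i)⁻¹

/-- The non-strict multiple zeta value `ζ̄(k₁,…,kₙ)`: the sum over weakly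
decreasing tuples `m₁ ≥ m₂ ≥ ⋯ ≥ mₙ > 0` of `1/(m₁^{k₁}⋯mₙ^{kₙ})`. -/
noncomputable def nmzeta (ks : List ℕ) : ℝ :=
  ∑' m : {f : Fin ks.length → ℕ // (∀ i, 0 < f i) ∧
      ∀ i j : Fin ks.length, i ≤ j → f j ≤ f i},
    ∏ i : Fin ks.length, ((m.1 i : ℝ) ^ ks.get i)⁻¹

/-- The evaluation map `Z : H⁰ → ℝ`, `Z(1) = 1`,
`Z(z_{k₁}⋯z_{kₙ}) = ζ(k₁,…,kₙ)` (extended ℚ-linearly to `H`). -/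
noncomputable def Z (a : H) : ℝ := Finsupp.sum a.coeff fun w c => (c : ℝ) * mzeta (toZ w)

/-- The n-evaluation map `Z̄ : H⁰ → ℝ`, `Z̄(1) = 1`,
`Z̄(z_{k₁}⋯z_{kₙ}) = ζ̄(k₁,…,kₙ)` (extended ℚ-linearly to `H`). -/
noncomputable def Zbar (a : H) : ℝ := Finsupp.sum a.coeff fun w c => (c : ℝ) * nmzeta (toZ w)

/-- `i`-fold n-harmonic power: `a^{*̄ 0} = 1`, `a^{*̄ (i+1)} = a *̄ a^{*̄ i}`. -/
noncomputable def nharmPow : ℕ → H → H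
  | 0, _ => 1
  | i + 1, a => nharm a (nharmPow i a)

/-- `i`-fold n-shuffle power: `a^{ш̄ 0} = 1`, `a^{ш̄ (i+1)} = a ш̄ a^{ш̄ i}`. -/
noncomputable def nshPow : ℕ → H → H
  | 0, _ => 1
  | i + 1, a => nsh a (nshPow i a)

end H

open H

/-- `IsRegHom mul ev f` says the ℚ-linear map `f : H → ℝ[T]` is a ℚ-algebra
homomorphism from `(H¹, mul)` to `ℝ[T]` which extends the evaluation map
`ev` on `H⁰` and sends `y` to `T`. -/
def IsRegHom (mul : H → H → H) (ev : H → ℝ) (f : H →ₗ[ℚ] Polynomial ℝ) : Prop :=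
  (∀ a ∈ H1, ∀ b ∈ H1, f (mul a b) = f a * f b) ∧
  (∀ a ∈ H0, f a = Polynomial.C (ev a)) ∧
  f Y = Polynomial.X

section
open Filter Topology

namespace EDS
open H

/-- linear extension of a function on words -/
noncomputable def linext {V : Type*} [AddCommGroup V] [Module ℚ V] (φ : List Letter → V) :
    H →ₗ[ℚ] V where
  toFun a := Finsupp.sum a.coeff fun w c => c • φ (FreeMonoid.toList w)
  map_add' a b := by
    rw [MonoidAlgebra.coeff_add]
    exact Finsupp.sum_add_index' (by simp) (by intros; rw [add_smul])
  map_smul' r a := by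
    rw [MonoidAlgebra.coeff_smul, Finsupp.sum_smul_index' (by simp)]
    simp [Finsupp.smul_sum, mul_smul]

/-- word of a list -/
noncomputable def W (l : List Letter) : H := word (FreeMonoid.ofList l)

@[simp] lemma linext_W {V : Type*} [AddCommGroup V] [Module ℚ V] (φ : List Letter → V)
    (l : List Letter) : linext φ (W l) = φ l := by
  simp [linext, W, word]

lemma W_mul (a b : List Letter) : W a * W b = W (a ++ b) := by
  simp [W, word, MonoidAlgebra.single_mul_single, FreeMonoid.ofList_append]

lemma W_nil : W [] = 1 := rfl
lemma X_eq : X = W [Letter.x] := rfl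
lemma Y_eq : Y = W [Letter.y] := rfl
lemma of_eq (u : Letter) : word (FreeMonoid.of u) = W [u] := rfl
lemma W_cons (u : Letter) (l : List Letter) : W (u :: l) = W [u] * W l := by
  rw [W_mul]; rfl

lemma mem_of_W (N : Submodule ℚ H) (h : ∀ l, W l ∈ N) (a : H) : a ∈ N := by
  induction a using MonoidAlgebra.induction_on with
  | of m => exact h (FreeMonoid.toList m)
  | add f g hf hg => exact N.add_mem hf hg
  | smul r f hf => exact N.smul_mem r hf

lemma lin_ext {V : Type*} [AddCommGroup V] [Module ℚ V] {f g : H →ₗ[ℚ] V}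
    (h : ∀ l, f (W l) = g (W l)) : f = g := by
  refine LinearMap.ext fun a => ?_
  exact mem_of_W (LinearMap.eqLocus f g) h a

/-- Hy -/
noncomputable def Hy : Submodule ℚ H := LinearMap.range (LinearMap.mulRight ℚ Y)

lemma H1_eq : H1 = Hy ⊔ Submodule.span ℚ {1} := rfl

lemma Hy_le_H1 : Hy ≤ H1 := le_sup_left

lemma one_mem_H1 : (1 : H) ∈ H1 := (le_sup_right : _ ≤ H1) (Submodule.mem_span_singleton_self 1)
lemma one_mem_H0 : (1 : H) ∈ H0 := (le_sup_right : _ ≤ H0) (Submodule.mem_span_singleton_self 1)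

lemma mul_mem_Hy (a : H) {b : H} (hb : b ∈ Hy) : a * b ∈ Hy := by
  obtain ⟨c, rfl⟩ := hb
  exact ⟨a * c, by simp [mul_assoc]⟩

lemma mulY_mem_Hy (a : H) : a * Y ∈ Hy := ⟨a, rfl⟩

lemma X_mul_mem_H0 {b : H} (hb : b ∈ Hy) : X * b ∈ H0 := by
  obtain ⟨c, rfl⟩ := hb
  exact (le_sup_left : _ ≤ H0) ⟨c, by simp [mul_assoc]⟩

lemma W_mem_Hy (l : List Letter) : W (l ++ [Letter.y]) ∈ Hy := by
  rw [← W_mul]; exact mulY_mem_Hy _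

lemma H0_le (N : Submodule ℚ H) (h1 : 1 ∈ N)
    (h : ∀ l, W (Letter.x :: (l ++ [Letter.y])) ∈ N) : H0 ≤ N := by
  refine sup_le ?_ (by simpa using h1)
  rintro _ ⟨a, rfl⟩
  change a ∈ N.comap _
  refine mem_of_W _ (fun l => ?_) a
  have := h l
  rw [W_cons, ← W_mul, ← mul_assoc] at this
  exact this

lemma Hy_le (N : Submodule ℚ H) 
    (h : ∀ l, W (l ++ [Letter.y]) ∈ N) : Hy ≤ N := by
  rintro _ ⟨a, rfl⟩
  change a ∈ N.comap _
  refine mem_of_W _ (fun l => ?_) a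
  have := h l
  rw [← W_mul] at this
  exact this

lemma H1_le (N : Submodule ℚ H) (h1 : 1 ∈ N)
    (h : ∀ l, W (l ++ [Letter.y]) ∈ N) : H1 ≤ N :=
  sup_le (Hy_le N h) (by simpa using h1)

lemma H0_le_H1 : H0 ≤ H1 := H0_le _ one_mem_H1 fun l => Hy_le_H1 (W_mem_Hy (Letter.x :: l))

lemma mulY_mem_H1 (b : H) (hb : b ∈ H1) : Y * b ∈ Hy := by
  have : H1 ≤ Hy.comap (LinearMap.mulLeft ℚ Y) := by
    refine H1_le _ ?_ fun l => ?_
    · change Y * 1 ∈ Hy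
      simpa using mulY_mem_Hy 1
    · exact mul_mem_Hy _ (W_mem_Hy l)
  exact this hb

/-- bilinear forms -/
noncomputable def nshL : H →ₗ[ℚ] H →ₗ[ℚ] H := linext fun a => linext fun b => nshW a b
noncomputable def nharmL : H →ₗ[ℚ] H →ₗ[ℚ] H :=
  linext fun a => linext fun b => nharmW (toZAux a 0) (toZAux b 0)

lemma nsh_eq (a b : H) : nsh a b = nshL a b := by
  simp only [nsh, nshL, linext, LinearMap.coe_mk, AddHom.coe_mk]
  rw [Finsupp.sum, Finsupp.sum, LinearMap.sum_apply]
  simp [mul_smul, Finsupp.smul_sum]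

lemma nharm_eq (a b : H) : nharm a b = nharmL a b := by
  simp only [nharm, nharmL, linext, LinearMap.coe_mk, AddHom.coe_mk]
  rw [Finsupp.sum, Finsupp.sum, LinearMap.sum_apply]
  simp [mul_smul, Finsupp.smul_sum, H.toZ]

noncomputable def ZL : H →ₗ[ℚ] ℝ := linext fun a => nmzeta (toZAux a 0)
lemma Zbar_eq (a : H) : Zbar a = ZL a := by
  simp only [Zbar, ZL, linext, LinearMap.coe_mk, AddHom.coe_mk]
  simp [Rat.smul_def, H.toZ]

@[simp] lemma nshL_W (a b : List Letter) : nshL (W a) (W b) = nshW a b := by simp [nshL]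
@[simp] lemma nharmL_W (a b : List Letter) :
    nharmL (W a) (W b) = nharmW (toZAux a 0) (toZAux b 0) := by simp [nharmL]

lemma nsh_nil (l : List Letter) : nshW [] l = W l := by rw [nshW]; rfl
lemma nsh_nil' (l : List Letter) : nshW l [] = W l := by cases l <;> rw [nshW] <;> rfl
lemma nsh_cons (u1 u2 : Letter) (w1 w2 : List Letter) : nshW (u1 :: w1) (u2 :: w2) =
      W [u1] * nshW w1 (u2 :: w2) +
        W [u2] * nshW (u1 :: w1) w2 -
        δ w1 • W (τ u1 :: u2 :: w2) - δ w2 • W (τ u2 :: u1 :: w1) := by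
  rw [nshW]; rfl

/-- generation lemma -/
noncomputable def Fil : ℕ → Submodule ℚ H
  | 0 => H0
  | n + 1 => Fil n ⊔ H0.map (LinearMap.mulLeft ℚ (Y ^ (n + 1)))

lemma H0_le_Fil (n : ℕ) : H0 ≤ Fil n := by
  induction n with
  | zero => exact le_rfl
  | succ n ih => exact ih.trans le_sup_left

lemma Fil_mono (n : ℕ) : Fil n ≤ Fil (n + 1) := le_sup_left

lemma Y_Fil (n : ℕ) : ∀ a ∈ Fil n, Y * a ∈ Fil (n + 1) := by
  induction n with
  | zero => 
    intro a ha
    exact (le_sup_right : _ ≤ Fil 1) ⟨a, ha, by simp⟩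
  | succ n ih =>
    have : Fil (n + 1) ≤ (Fil (n + 2)).comap (LinearMap.mulLeft ℚ Y) := by
      refine sup_le (fun a ha => Fil_mono _ (ih a ha)) ?_
      rintro _ ⟨a, ha, rfl⟩
      refine (le_sup_right : _ ≤ Fil (n + 2)) ⟨a, ha, ?_⟩
      simp [pow_succ' Y (n + 1), mul_assoc]
    exact this

lemma H1_mem_Fil : ∀ l : List Letter, ∃ n, W (l ++ [Letter.y]) ∈ Fil n
  | [] => ⟨1, by simpa [Y_eq] using Y_Fil 0 1 one_mem_H0⟩
  | Letter.x :: l => ⟨0, by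
      rw [List.cons_append, W_cons]
      exact X_mul_mem_H0 (W_mem_Hy l)⟩
  | Letter.y :: l => by
      obtain ⟨n, hn⟩ := H1_mem_Fil l
      exact ⟨n + 1, by
        rw [List.cons_append, W_cons]
        exact Y_Fil _ _ hn⟩

lemma Fil_le_H1 (n : ℕ) : Fil n ≤ H1 := by
  induction n with
  | zero => exact H0_le_H1
  | succ n ih => 
    refine sup_le ih ?_
    rintro _ ⟨a, ha, rfl⟩
    change Y ^ (n + 1) * a ∈ H1
    have : Y ^ n * a ∈ H1 := by
      cases n with
      | zero => simpa using H0_le_H1 ha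
      | succ n => exact ih ((le_sup_right : _ ≤ Fil (n + 1)) ⟨a, ha, rfl⟩)
    rw [pow_succ', mul_assoc]
    exact Hy_le_H1 (mulY_mem_H1 _ this)

lemma pow_mem_Fil (n : ℕ) {a : H} (ha : a ∈ H0) : Y ^ n * a ∈ Fil n := by
  cases n with
  | zero => simpa [Fil] using ha
  | succ n => exact (le_sup_right : _ ≤ Fil (n + 1)) ⟨a, ha, rfl⟩

lemma gen (m : H →ₗ[ℚ] H) (h0 : ∀ a ∈ H0, m a - Y * a ∈ H0)
    (h1 : ∀ b ∈ H1, m (Y * b) - Y * (Y * b) - Y * m b ∈ H0)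
    (N : Submodule ℚ H) (hN : H0 ≤ N) (hm : ∀ a ∈ H1, a ∈ N → m a ∈ N) : H1 ≤ N := by
  have key : ∀ n : ℕ, ∀ a ∈ H0, m (Y ^ n * a) - (n + 1 : ℚ) • (Y ^ (n + 1) * a) ∈ Fil n := by
    intro n a ha
    induction n with
    | zero => simpa [Fil] using h0 a ha
    | succ n ih =>
      have e := h1 (Y ^ n * a) (Fil_le_H1 n (pow_mem_Fil n ha))
      have e2 := Y_Fil _ _ ih
      have := (Fil (n + 1)).add_mem (H0_le_Fil (n + 1) e) e2
      convert this using 1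
      simp only [mul_sub, mul_smul_comm, ← mul_assoc, ← pow_succ']
      push_cast
      module
  have hF : ∀ n, Fil n ≤ N := by
    intro n
    induction n with
    | zero => exact hN
    | succ n ih =>
      refine sup_le ih ?_
      rintro _ ⟨a, ha, rfl⟩
      change Y ^ (n + 1) * a ∈ N
      have h2 := hm _ (Fil_le_H1 n (pow_mem_Fil n ha)) (ih (pow_mem_Fil n ha))
      have h3 := N.sub_mem h2 (ih (key n a ha))
      rw [sub_sub_cancel] at h3
      have : (n + 1 : ℚ) ≠ 0 := by positivity
      exact (Submodule.smul_mem_iff N this).1 h3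
  refine H1_le N (hN one_mem_H0) fun l => ?_
  obtain ⟨n, hn⟩ := H1_mem_Fil l
  exact hF n hn

def Ey (l : List Letter) : Prop := ∃ r, l = r ++ [Letter.y]

lemma Ey_append (r : List Letter) : Ey (r ++ [Letter.y]) := ⟨r, rfl⟩

lemma Ey.mem {l : List Letter} (h : Ey l) : W l ∈ Hy := by
  obtain ⟨r, rfl⟩ := h; exact W_mem_Hy r

lemma Ey.cons {l : List Letter} (h : Ey l) (u : Letter) : Ey (u :: l) := by
  obtain ⟨r, rfl⟩ := h; exact ⟨u :: r, rfl⟩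

lemma Ey.cases {u : Letter} {l : List Letter} (h : Ey (u :: l)) : (u = Letter.y ∧ l = []) ∨ Ey l := by
  obtain ⟨r, hr⟩ := h
  cases r with
  | nil => left; simpa using hr
  | cons v r => right; exact ⟨r, by simpa using (List.cons.inj hr).2⟩

lemma nshW_mem (l1 : List Letter) : ∀ l2, Ey l1 → Ey l2 → nshW l1 l2 ∈ Hy := by
  induction l1 with
  | nil => intro l2 _ h2; rw [nsh_nil]; exact h2.mem
  | cons u1 w1 ih1 =>
    intro l2
    induction l2 with
    | nil => intro h1 _; rw [nsh_nil']; exact h1.mem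
    | cons u2 w2 ih2 =>
      intro h1 h2
      rw [nsh_cons]
      refine sub_mem (sub_mem (add_mem (mul_mem_Hy _ ?_) (mul_mem_Hy _ ?_)) ?_) ?_
      · rcases h1.cases with ⟨-, rfl⟩ | h
        · rw [nsh_nil]; exact h2.mem
        · exact ih1 _ h h2
      · rcases h2.cases with ⟨-, rfl⟩ | h
        · rw [nsh_nil']; exact h1.mem
        · exact ih2 h1 h
      · exact Submodule.smul_mem _ _ (h2.cons _).mem
      · exact Submodule.smul_mem _ _ (h1.cons _).mem

/-- bilinear closure from words -/
lemma bil_mem (B : H →ₗ[ℚ] H →ₗ[ℚ] H) (h1 : B 1 1 ∈ H1)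
    (h2 : ∀ r, B 1 (W (r ++ [Letter.y])) ∈ H1) (h3 : ∀ r, B (W (r ++ [Letter.y])) 1 ∈ H1)
    (h4 : ∀ r s, B (W (r ++ [Letter.y])) (W (s ++ [Letter.y])) ∈ H1) :
    ∀ a ∈ H1, ∀ b ∈ H1, B a b ∈ H1 := by
  intro a ha b hb
  have : H1 ≤ H1.comap (B.flip b) := by
    refine H1_le _ ?_ fun r => ?_
    · have : H1 ≤ H1.comap (B 1) := H1_le _ h1 h2
      exact this hb
    · have : H1 ≤ H1.comap (B (W (r ++ [Letter.y]))) := H1_le _ (h3 r) (h4 r)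
      exact this hb
  exact this ha

lemma nshL_mem : ∀ a ∈ H1, ∀ b ∈ H1, nshL a b ∈ H1 := by
  refine bil_mem _ ?_ ?_ ?_ ?_
  · rw [← W_nil, nshL_W, nsh_nil, W_nil]; exact one_mem_H1
  · intro r; rw [← W_nil, nshL_W, nsh_nil]; exact Hy_le_H1 (W_mem_Hy r)
  · intro r; rw [← W_nil, nshL_W, nsh_nil']; exact Hy_le_H1 (W_mem_Hy r)
  · intro r s; rw [nshL_W]; exact Hy_le_H1 (nshW_mem _ _ (Ey_append r) (Ey_append s))

lemma δ_append (r : List Letter) : δ (r ++ [Letter.y]) = 0 := by cases r <;> rfl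

lemma nsh_h0 : ∀ a ∈ H0, nshL Y a - Y * a ∈ H0 := by
  have : H0 ≤ H0.comap (nshL Y - LinearMap.mulLeft ℚ Y) := by
    refine H0_le _ ?_ fun l => ?_
    · rw [Submodule.mem_comap, LinearMap.sub_apply, LinearMap.mulLeft_apply, mul_one, Y_eq, ← W_nil, nshL_W, nsh_nil']
      simp
    · rw [Submodule.mem_comap, LinearMap.sub_apply, LinearMap.mulLeft_apply, Y_eq, nshL_W, nsh_cons,
        nsh_nil, δ_append]
      have e1 := X_mul_mem_H0 (nshW_mem [Letter.y] _ (Ey_append []) (Ey_append l))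
      have e2 := X_mul_mem_H0 ((Ey_append l).cons Letter.x).mem
      have := sub_mem e1 e2
      convert this using 1
      simp only [X_eq, W_mul, δ, τ, one_smul, zero_smul, List.cons_append, List.nil_append]
      abel
  exact this

lemma nsh_h1 : ∀ b ∈ H1, nshL Y (Y * b) - Y * (Y * b) - Y * nshL Y b ∈ H0 := by
  have : H1 ≤ H0.comap (nshL Y ∘ₗ LinearMap.mulLeft ℚ Y -
      LinearMap.mulLeft ℚ Y ∘ₗ LinearMap.mulLeft ℚ Y - LinearMap.mulLeft ℚ Y ∘ₗ nshL Y) := by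
    refine H1_le _ ?_ fun l => ?_
    · simp only [Submodule.mem_comap, LinearMap.sub_apply, LinearMap.mulLeft_apply,
        LinearMap.comp_apply, Y_eq, ← W_nil, nshL_W, W_mul, nsh_nil', List.append_nil]
      rw [nsh_cons, nsh_nil, nsh_nil']
      have e2 := X_mul_mem_H0 (Ey_append []).mem
      have := neg_mem (add_mem e2 e2)
      convert this using 1
      simp only [X_eq, W_mul, δ, τ, one_smul, List.cons_append, List.nil_append]
      abel
    · simp only [Submodule.mem_comap, LinearMap.sub_apply, LinearMap.mulLeft_apply,
        LinearMap.comp_apply, Y_eq, nshL_W, W_mul, List.cons_append, List.nil_append]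
      rw [nsh_cons, nsh_nil, δ_append]
      have e2 := X_mul_mem_H0 ((Ey_append l).cons Letter.y).mem
      have := neg_mem e2
      convert this using 1
      simp only [X_eq, W_mul, δ, τ, one_smul, zero_smul, List.cons_append, List.nil_append]
      abel
  exact this

/-! harmonic -/

def zl (ks : List ℕ) : List Letter :=
  ks.flatMap fun k => List.replicate (k - 1) Letter.x ++ [Letter.y]

def Pos (ks : List ℕ) : Prop := ∀ k ∈ ks, 1 ≤ k

lemma Pos.tail {k : ℕ} {ks : List ℕ} (h : Pos (k :: ks)) : Pos ks :=
  fun j hj => h j (List.mem_cons_of_mem _ hj)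
lemma Pos.head {k : ℕ} {ks : List ℕ} (h : Pos (k :: ks)) : 1 ≤ k :=
  h k (by simp)
lemma Pos.cons {k : ℕ} {ks : List ℕ} (hk : 1 ≤ k) (h : Pos ks) : Pos (k :: ks) := by
  intro j hj
  rcases List.mem_cons.1 hj with rfl | hj
  · exact hk
  · exact h j hj

lemma zl_nil : zl [] = [] := rfl
lemma zl_cons (k : ℕ) (ks : List ℕ) :
    zl (k :: ks) = List.replicate (k - 1) Letter.x ++ Letter.y :: zl ks := by
  simp [zl]
lemma z_eq (k : ℕ) : z k = W (List.replicate (k - 1) Letter.x ++ [Letter.y]) := rfl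
lemma zListW_eq (ks : List ℕ) : word (zListW ks) = W (zl ks) := rfl
lemma W_zl_cons (k : ℕ) (ks : List ℕ) : W (zl (k :: ks)) = z k * W (zl ks) := by
  rw [z_eq, W_mul, zl_cons]; simp

lemma toZAux_repl (k n : ℕ) (l : List Letter) :
    toZAux (List.replicate k Letter.x ++ Letter.y :: l) n = (n + k + 1) :: toZAux l 0 := by
  induction k generalizing n with
  | zero => rfl
  | succ k ih =>
    rw [List.replicate_succ, List.cons_append, toZAux, ih]
    congr 1; omega

lemma toZ_zl : ∀ ks, Pos ks → toZAux (zl ks) 0 = ks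
  | [], _ => rfl
  | k :: ks, h => by
    rw [zl_cons, toZAux_repl, toZ_zl ks h.tail]
    have := h.head
    congr 1; omega

lemma exists_ks : ∀ l : List Letter, ∃ k ks, 1 ≤ k ∧ Pos ks ∧ l ++ [Letter.y] = zl (k :: ks)
  | [] => ⟨1, [], le_rfl, by simp [Pos], by simp [zl]⟩
  | Letter.x :: l => by
    obtain ⟨k, ks, hk, h, e⟩ := exists_ks l
    refine ⟨k + 1, ks, by omega, h, ?_⟩
    rw [List.cons_append, e, zl_cons, zl_cons]
    obtain ⟨j, rfl⟩ : ∃ j, k = j + 1 := ⟨k - 1, by omega⟩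
    simp [List.replicate_succ]
  | Letter.y :: l => by
    obtain ⟨k, ks, hk, h, e⟩ := exists_ks l
    refine ⟨1, k :: ks, le_rfl, h.cons hk, ?_⟩
    rw [List.cons_append, e, zl_cons 1]
    simp

lemma exists_ks0 (l : List Letter) :
    ∃ k ks, 2 ≤ k ∧ Pos ks ∧ Letter.x :: (l ++ [Letter.y]) = zl (k :: ks) := by
  obtain ⟨k, ks, hk, h, e⟩ := exists_ks l
  refine ⟨k + 1, ks, by omega, h, ?_⟩
  rw [e, zl_cons, zl_cons]
  obtain ⟨j, rfl⟩ : ∃ j, k = j + 1 := ⟨k - 1, by omega⟩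
  simp [List.replicate_succ]

lemma H1_le' (N : Submodule ℚ H) (h : ∀ ks, Pos ks → W (zl ks) ∈ N) : H1 ≤ N := by
  refine H1_le _ (h [] (by simp [Pos])) fun l => ?_
  obtain ⟨k, ks, hk, hp, e⟩ := exists_ks l
  rw [e]; exact h _ (hp.cons hk)

lemma H0_le' (N : Submodule ℚ H) (h1 : 1 ∈ N)
    (h : ∀ k ks, 2 ≤ k → Pos ks → W (zl (k :: ks)) ∈ N) : H0 ≤ N := by
  refine H0_le _ h1 fun l => ?_
  obtain ⟨k, ks, hk, hp, e⟩ := exists_ks0 l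
  rw [e]; exact h _ _ hk hp

lemma nharmL_zl (a b : List ℕ) (ha : Pos a) (hb : Pos b) :
    nharmL (W (zl a)) (W (zl b)) = nharmW a b := by
  rw [nharmL_W, toZ_zl a ha, toZ_zl b hb]

lemma nharm_nil (b : List ℕ) : nharmW [] b = W (zl b) := by rw [nharmW]; rfl
lemma nharm_nil' (b : List ℕ) : nharmW b [] = W (zl b) := by cases b <;> rw [nharmW] <;> rfl
lemma nharm_cons (k l : ℕ) (a b : List ℕ) : nharmW (k :: a) (l :: b) =
    z k * nharmW a (l :: b) + z l * nharmW (k :: a) b - z (k + l) * nharmW a b := by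
  rw [nharmW]

lemma z_mem_Hy (k : ℕ) : z k ∈ Hy := W_mem_Hy _

lemma z_mul_mem (k : ℕ) {b : H} (hb : b ∈ H1) : z k * b ∈ Hy := by
  have : H1 ≤ Hy.comap (LinearMap.mulLeft ℚ (z k)) := by
    refine H1_le _ ?_ fun l => ?_
    · change z k * 1 ∈ Hy
      rw [mul_one]; exact z_mem_Hy k
    · exact mul_mem_Hy _ (W_mem_Hy l)
  exact this hb

lemma z_mul_mem0 (k : ℕ) (hk : 2 ≤ k) {b : H} (hb : b ∈ H1) : z k * b ∈ H0 := by
  obtain ⟨j, rfl⟩ : ∃ j, k = j + 2 := ⟨k - 2, by omega⟩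
  have e : z (j + 2) = X * z (j + 1) := by
    rw [z_eq, z_eq, X_eq, W_mul]; simp [List.replicate_succ]
  rw [e, mul_assoc]
  exact X_mul_mem_H0 (z_mul_mem _ hb)

lemma W_zl_mem (b : List ℕ) : W (zl b) ∈ H1 := by
  induction b with
  | nil => exact one_mem_H1
  | cons k b ih => rw [W_zl_cons]; exact Hy_le_H1 (z_mul_mem k ih)

lemma nharmW_mem (a : List ℕ) : ∀ b, nharmW a b ∈ H1 := by
  induction a with
  | nil => intro b; rw [nharm_nil]; exact W_zl_mem b
  | cons k a ih1 =>
    intro b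
    induction b with
    | nil => rw [nharm_nil']; exact W_zl_mem _
    | cons l b ih2 =>
      rw [nharm_cons]
      exact Hy_le_H1 (sub_mem (add_mem (z_mul_mem _ (ih1 _)) (z_mul_mem _ ih2)) (z_mul_mem _ (ih1 _)))

lemma nharmL_mem : ∀ a ∈ H1, ∀ b ∈ H1, nharmL a b ∈ H1 := by
  refine bil_mem _ ?_ ?_ ?_ ?_
  · rw [← W_nil, nharmL_W]; exact nharmW_mem _ _
  · intro r; rw [← W_nil, nharmL_W]; exact nharmW_mem _ _
  · intro r; rw [← W_nil, nharmL_W]; exact nharmW_mem _ _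
  · intro r s; rw [nharmL_W]; exact nharmW_mem _ _

lemma Y_zl : Y = W (zl [1]) := by rw [Y_eq]; simp [zl]
lemma Y_z : Y = z 1 := by rw [Y_eq, z_eq]; simp
lemma Pos_one : Pos [1] := by simp [Pos]

lemma nharm_h0 : ∀ a ∈ H0, nharmL Y a - Y * a ∈ H0 := by
  have : H0 ≤ H0.comap (nharmL Y - LinearMap.mulLeft ℚ Y) := by
    refine H0_le' _ ?_ fun k ks hk hp => ?_
    · rw [Submodule.mem_comap, LinearMap.sub_apply, LinearMap.mulLeft_apply, mul_one, Y_zl,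
        ← W_nil, ← zl_nil, nharmL_zl _ _ Pos_one (by simp [Pos]), nharm_nil']
      simp
    · rw [Submodule.mem_comap, LinearMap.sub_apply, LinearMap.mulLeft_apply]
      nth_rw 1 [Y_zl]
      rw [nharmL_zl _ _ Pos_one (hp.cons (by omega)), nharm_cons, nharm_nil, nharm_nil, Y_z]
      have := sub_mem (z_mul_mem0 k hk (nharmW_mem [1] ks))
        (z_mul_mem0 (1 + k) (by omega) (W_zl_mem ks))
      convert this using 1
      abel
  exact this

lemma nharm_h1 : ∀ b ∈ H1, nharmL Y (Y * b) - Y * (Y * b) - Y * nharmL Y b ∈ H0 := by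
  have : H1 ≤ H0.comap (nharmL Y ∘ₗ LinearMap.mulLeft ℚ Y -
      LinearMap.mulLeft ℚ Y ∘ₗ LinearMap.mulLeft ℚ Y - LinearMap.mulLeft ℚ Y ∘ₗ nharmL Y) := by
    refine H1_le' _ fun ks hp => ?_
    simp only [Submodule.mem_comap, LinearMap.sub_apply, LinearMap.mulLeft_apply,
        LinearMap.comp_apply]
    have e : nharmL Y (Y * W (zl ks)) = nharmW [1] (1 :: ks) := by
      rw [Y_z, ← W_zl_cons, ← Y_z, Y_zl, nharmL_zl _ _ Pos_one (hp.cons le_rfl)]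
    have e' : nharmL Y (W (zl ks)) = nharmW [1] ks := by
      rw [Y_zl, nharmL_zl _ _ Pos_one hp]
    rw [e, e', nharm_cons, nharm_nil, nharm_nil, W_zl_cons, Y_z]
    have := neg_mem (z_mul_mem0 (1 + 1) (by omega) (W_zl_mem ks))
    convert this using 1
    abel
  exact this

/-- coefficients of the generating series of a word -/
noncomputable def cf : List Letter → ℕ → ℝ
  | [], M => if M = 0 then 1 else 0
  | Letter.x :: l, M => cf l M / M
  | Letter.y :: l, M => (∑ i ∈ Finset.range (M + 1), cf l i) / M

noncomputable def c : H →ₗ[ℚ] (ℕ → ℝ) := linext cf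
noncomputable def s (M : ℕ) : H →ₗ[ℚ] ℝ := linext fun l => ∑ i ∈ Finset.range (M + 1), cf l i

lemma c_W (l : List Letter) : c (W l) = cf l := by simp [c]

/-- evaluation of coefficient -/
noncomputable def cM (M : ℕ) : H →ₗ[ℚ] ℝ := LinearMap.proj M ∘ₗ c
lemma cM_apply (M : ℕ) (a : H) : cM M a = c a M := rfl

lemma s_eq (M : ℕ) (a : H) : s M a = ∑ i ∈ Finset.range (M + 1), c a i := by
  have : s M = ∑ i ∈ Finset.range (M + 1), cM i := by
    refine lin_ext fun l => ?_
    simp [s, LinearMap.sum_apply, cM_apply, c_W]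
  rw [this]; simp [LinearMap.sum_apply, cM_apply]

lemma c_X (a : H) (M : ℕ) : c (X * a) M = c a M / M := by
  have : cM M ∘ₗ LinearMap.mulLeft ℚ X = (M : ℚ)⁻¹ • cM M := by
    refine lin_ext fun l => ?_
    simp only [LinearMap.comp_apply, LinearMap.mulLeft_apply, X_eq, W_mul, cM_apply, c_W,
      LinearMap.smul_apply, Rat.smul_def, List.cons_append, List.nil_append, cf]
    push_cast; rw [div_eq_inv_mul]
  have := LinearMap.congr_fun this a
  simp only [LinearMap.comp_apply, LinearMap.mulLeft_apply, cM_apply, 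
      LinearMap.smul_apply, Rat.smul_def] at this
  rw [this]; push_cast; rw [div_eq_inv_mul]

lemma c_Y (a : H) (M : ℕ) : c (Y * a) M = s M a / M := by
  have : cM M ∘ₗ LinearMap.mulLeft ℚ Y = (M : ℚ)⁻¹ • s M := by
    refine lin_ext fun l => ?_
    simp only [LinearMap.comp_apply, LinearMap.mulLeft_apply, Y_eq, W_mul, cM_apply, c_W, s, linext_W,
      LinearMap.smul_apply, Rat.smul_def, List.cons_append, List.nil_append, cf]
    push_cast; rw [div_eq_inv_mul]
  have := LinearMap.congr_fun this a
  simp only [LinearMap.comp_apply, LinearMap.mulLeft_apply, cM_apply, 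
      LinearMap.smul_apply, Rat.smul_def] at this
  rw [this]; push_cast; rw [div_eq_inv_mul]

lemma c_z (k : ℕ) (a : H) (M : ℕ) : c (z (k + 1) * a) M = s M a / (M : ℝ) ^ (k + 1) := by
  induction k with
  | zero => rw [← Y_z, c_Y]; simp
  | succ k ih =>
    have e : z (k + 1 + 1) = X * z (k + 1) := by
      rw [z_eq, z_eq, X_eq, W_mul]; simp [List.replicate_succ]
    rw [e, mul_assoc, c_X, ih, div_div, ← pow_succ]

lemma s_one (M : ℕ) : s M 1 = 1 := by
  rw [← W_nil]; simp [s, cf]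

lemma s_z (k : ℕ) (hk : 1 ≤ k) (a : H) (M : ℕ) :
    s M (z k * a) = ∑ m ∈ Finset.range (M + 1), s m a / (m : ℝ) ^ k := by
  obtain ⟨j, rfl⟩ : ∃ j, k = j + 1 := ⟨k - 1, by omega⟩
  rw [s_eq]; simp [c_z]

lemma sum_parts (a b : ℕ → ℝ) (M : ℕ) :
    (∑ m ∈ Finset.range (M + 1), a m) * (∑ m ∈ Finset.range (M + 1), b m) =
    ∑ m ∈ Finset.range (M + 1), a m * (∑ i ∈ Finset.range (m + 1), b i) +
    ∑ m ∈ Finset.range (M + 1), b m * (∑ i ∈ Finset.range (m + 1), a i) -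
    ∑ m ∈ Finset.range (M + 1), a m * b m := by
  induction M with
  | zero => simp; ring
  | succ M ih =>
    simp only [Finset.sum_range_succ _ (M + 1)]
    linear_combination ih

lemma s_nharmW (a : List ℕ) : ∀ b, Pos a → Pos b → ∀ M,
    s M (nharmW a b) = s M (W (zl a)) * s M (W (zl b)) := by
  induction a with
  | nil => intro b _ _ M; rw [nharm_nil, zl_nil, W_nil, s_one, one_mul]
  | cons k a ih1 =>
    intro b
    induction b with
    | nil => intro _ _ M; rw [nharm_nil', zl_nil, W_nil, s_one, mul_one]
    | cons l b ih2 =>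
      intro ha hb M
      have hk := ha.head
      have hl := hb.head
      rw [nharm_cons, map_sub, map_add, s_z k hk, s_z l hl, s_z (k + l) (by omega),
        W_zl_cons, W_zl_cons, s_z k hk, s_z l hl, sum_parts]
      congr 1
      · congr 1
        · refine Finset.sum_congr rfl fun m _ => ?_
          rw [ih1 _ ha.tail hb, W_zl_cons, s_z l hl]; ring
        · refine Finset.sum_congr rfl fun m _ => ?_
          rw [ih2 ha hb.tail, W_zl_cons, s_z k hk]; ring
      · refine Finset.sum_congr rfl fun m _ => ?_
        rw [ih1 _ ha.tail hb.tail, pow_add, div_mul_div_comm]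

lemma s_nharm {a b : H} (ha : a ∈ H1) (hb : b ∈ H1) (M : ℕ) :
    s M (nharmL a b) = s M a * s M b := by
  have h1 : ∀ ks, Pos ks → s M (nharmL (W (zl ks)) b) = s M (W (zl ks)) * s M b := by
    intro ks hp
    have : H1 ≤ LinearMap.eqLocus (s M ∘ₗ nharmL (W (zl ks)))
        (LinearMap.mulLeft ℚ (s M (W (zl ks))) ∘ₗ s M) := by
      refine H1_le' _ fun ls hl => ?_
      change s M (nharmL (W (zl ks)) (W (zl ls))) = _ * _
      rw [nharmL_zl _ _ hp hl, s_nharmW _ _ hp hl]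
    exact this hb
  have : H1 ≤ LinearMap.eqLocus (s M ∘ₗ nharmL.flip b)
        (LinearMap.mulRight ℚ (s M b) ∘ₗ s M) := H1_le' _ h1
  exact this ha

/-! power series -/
noncomputable def PS (a : H) : PowerSeries ℝ := PowerSeries.mk (c a)

lemma PS_add (a b : H) : PS (a + b) = PS a + PS b := by ext; simp [PS]
lemma PS_sub (a b : H) : PS (a - b) = PS a - PS b := by ext; simp [PS]

noncomputable def Dd (f : PowerSeries ℝ) : PowerSeries ℝ := PowerSeries.X * PowerSeries.derivative ℝ f

lemma coeff_Dd (f : PowerSeries ℝ) (n : ℕ) : PowerSeries.coeff n (Dd f) = n * PowerSeries.coeff n f := by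
  cases n with
  | zero => simp [Dd]
  | succ n => rw [Dd, PowerSeries.coeff_succ_X_mul, PowerSeries.coeff_derivative]; push_cast; ring

lemma Dd_inj {f g : PowerSeries ℝ} (h0 : PowerSeries.coeff 0 f = PowerSeries.coeff 0 g)
    (h : Dd f = Dd g) : f = g := by
  ext n
  cases n with
  | zero => exact h0
  | succ n =>
    have := congrArg (PowerSeries.coeff (n + 1)) h
    rw [coeff_Dd, coeff_Dd] at this
    exact mul_left_cancel₀ (by positivity) this

lemma Dd_add (f g : PowerSeries ℝ) : Dd (f + g) = Dd f + Dd g := by simp [Dd, mul_add]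
lemma Dd_sub (f g : PowerSeries ℝ) : Dd (f - g) = Dd f - Dd g := by simp [Dd, mul_sub]
lemma Dd_mul (f g : PowerSeries ℝ) : Dd (f * g) = Dd f * g + f * Dd g := by
  simp only [Dd, Derivation.leibniz, smul_eq_mul]; ring

lemma c_zero {a : H} (ha : a ∈ Hy) : c a 0 = 0 := by
  have : Hy ≤ LinearMap.ker (cM 0) := by
    refine Hy_le _ fun l => ?_
    rw [LinearMap.mem_ker, cM_apply, c_W]
    rcases l with _ | ⟨_ | _, l⟩ <;> simp [cf]
  exact this ha

noncomputable def G : PowerSeries ℝ := PowerSeries.mk 1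
lemma G_mul : G * (1 - PowerSeries.X) = 1 := PowerSeries.mk_one_mul_one_sub_eq_one ℝ

lemma coeff_mul_G (a : H) (n : ℕ) : PowerSeries.coeff n (PS a * G) = s n a := by
  rw [PowerSeries.coeff_mul, s_eq, Finset.Nat.sum_antidiagonal_eq_sum_range_succ_mk]
  simp [PS, G]

lemma Dd_X {a : H} (ha : a ∈ Hy) : Dd (PS (X * a)) = PS a := by
  ext n
  rw [coeff_Dd]
  simp only [PS, PowerSeries.coeff_mk, c_X]
  rcases Nat.eq_zero_or_pos n with rfl | hn
  · simp [c_zero ha]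
  · field_simp

lemma Dd_Y {a : H} (ha : a ∈ Hy) : Dd (PS (Y * a)) = PS a * G := by
  ext n
  rw [coeff_Dd, coeff_mul_G]
  simp only [PS, PowerSeries.coeff_mk, c_Y]
  rcases Nat.eq_zero_or_pos n with rfl | hn
  · simp [s_eq, c_zero ha]
  · field_simp

lemma Dd_Y1 : Dd (PS Y) = PowerSeries.X * G := by
  ext n
  rw [coeff_Dd]
  have : Y = Y * 1 := (mul_one _).symm
  rw [this]
  simp only [PS, PowerSeries.coeff_mk, c_Y, s_one]
  rcases n with _ | n
  · simp
  · rw [PowerSeries.coeff_succ_X_mul]; simp [G]; field_simp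

lemma G_sub : G - 1 = PowerSeries.X * G := by
  linear_combination G_mul

lemma PS_c0 {a : H} (ha : a ∈ Hy) : PowerSeries.coeff 0 (PS a) = 0 := by simp [PS, c_zero ha]

lemma Y_mem : Y ∈ Hy := by simpa using mulY_mem_Hy 1

lemma PS_nshW (l : List Letter) : Ey l → PS (nshW [Letter.y] l) = PS Y * PS (W l) := by
  induction l with
  | nil => rintro ⟨r, hr⟩; simp at hr
  | cons u w ih =>
    intro h
    have hW := h.mem
    have hm := nshW_mem [Letter.y] _ (Ey_append []) h
    refine Dd_inj ?_ ?_
    · rw [PS_c0 hm]; simp [PowerSeries.coeff_mul, PS_c0 hW]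
    rcases h.cases with ⟨rfl, rfl⟩ | hw
    · rw [nsh_cons, nsh_nil, nsh_nil']
      simp only [δ, τ, one_smul]
      rw [W_cons Letter.x, ← X_eq, ← Y_eq]
      simp only [PS_sub, PS_add, Dd_sub, Dd_add, Dd_Y Y_mem, Dd_X Y_mem, Dd_mul, Dd_Y1]
      linear_combination 2 * PS Y * G_sub
    · have hd : δ w = 0 := by obtain ⟨r, rfl⟩ := hw; exact δ_append r
      rw [nsh_cons, nsh_nil, hd, zero_smul, sub_zero]
      simp only [δ, τ, one_smul]
      rw [W_cons Letter.x, ← X_eq, ← Y_eq, PS_sub, PS_add, Dd_sub, Dd_add, Dd_Y hW, Dd_X hW, Dd_mul,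
        Dd_Y1]
      have hn := nshW_mem [Letter.y] _ (Ey_append []) hw
      cases u with
      | x =>
        rw [← X_eq, Dd_X hn, ih hw]
        have e : Dd (PS (W (Letter.x :: w))) = PS (W w) := by
          rw [W_cons, ← X_eq, Dd_X hw.mem]
        rw [e]
        linear_combination PS (W (Letter.x :: w)) * G_sub
      | y =>
        rw [← Y_eq, Dd_Y hn, ih hw]
        have e : Dd (PS (W (Letter.y :: w))) = PS (W w) * G := by
          rw [W_cons, ← Y_eq, Dd_Y hw.mem]
        rw [e]
        linear_combination PS (W (Letter.y :: w)) * G_sub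

lemma c_nsh {b : H} (hb : b ∈ H1) (n : ℕ) : c (nshL Y b) n =
    ∑ p ∈ Finset.HasAntidiagonal.antidiagonal n, c Y p.1 * c b p.2 := by
  have : H1 ≤ LinearMap.eqLocus (cM n ∘ₗ nshL Y)
      (∑ p ∈ Finset.HasAntidiagonal.antidiagonal n, LinearMap.mulLeft ℚ (c Y p.1) ∘ₗ cM p.2) := by
    refine H1_le _ ?_ fun l => ?_
    · change c (nshL Y 1) n = _
      rw [Y_eq, ← W_nil, nshL_W, nsh_nil', W_nil, ← Y_eq]
      have e := congrArg (PowerSeries.coeff n) (mul_one (PS Y))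
      rw [PowerSeries.coeff_mul] at e
      simp only [LinearMap.sum_apply, LinearMap.comp_apply, cM_apply, LinearMap.mulLeft_apply]
      refine Eq.trans (Eq.symm (e.trans (by simp [PS]))) (Finset.sum_congr rfl fun p _ => ?_)
      rw [← W_nil, c_W]
      simp [PS, cf, PowerSeries.coeff_one]
    · change c (nshL Y (W (l ++ [Letter.y]))) n = _
      have e := congrArg (PowerSeries.coeff n) (PS_nshW _ (Ey_append l))
      rw [PowerSeries.coeff_mul] at e
      rw [Y_eq, nshL_W]
      simp only [LinearMap.sum_apply, LinearMap.comp_apply, cM_apply, LinearMap.mulLeft_apply]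
      simpa [PS, ← Y_eq] using e
  have := this hb
  simpa [LinearMap.sum_apply, cM_apply] using this

lemma cf_nonneg : ∀ (l : List Letter) (M : ℕ), 0 ≤ cf l M
  | [], M => by simp only [cf]; split_ifs <;> norm_num
  | Letter.x :: l, M => by simp only [cf]; exact div_nonneg (cf_nonneg l M) (by positivity)
  | Letter.y :: l, M => by
    simp only [cf]; exact div_nonneg (Finset.sum_nonneg fun i _ => cf_nonneg l i) (by positivity)

lemma cf_le : ∀ (l : List Letter) (M : ℕ), cf l M ≤ 2 ^ l.length
  | [], M => by simp only [cf]; split_ifs <;> norm_num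
  | u :: l, 0 => by cases u <;> simp [cf]
  | Letter.x :: l, M + 1 => by
    simp only [cf, List.length_cons]
    have h := cf_le l (M + 1)
    have h0 := cf_nonneg l (M + 1)
    have : cf l (M + 1) / ((M + 1 : ℕ) : ℝ) ≤ cf l (M + 1) := 
      div_le_self h0 (by push_cast; linarith [Nat.cast_nonneg (α := ℝ) M])
    have : (2:ℝ) ^ (l.length + 1) = 2 * 2 ^ l.length := by ring
    nlinarith
  | Letter.y :: l, M + 1 => by
    simp only [cf, List.length_cons]
    have h : ∑ i ∈ Finset.range (M + 1 + 1), cf l i ≤ ∑ i ∈ Finset.range (M + 1 + 1), (2:ℝ) ^ l.length :=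
      Finset.sum_le_sum fun i _ => cf_le l i
    rw [div_le_iff₀ (by positivity)]
    refine h.trans ?_
    simp only [Finset.sum_const, Finset.card_range, nsmul_eq_mul]
    push_cast
    have : (2:ℝ) ^ (l.length + 1) = 2 * 2 ^ l.length := by ring
    rw [this]
    have : (0:ℝ) < 2 ^ l.length := by positivity
    have := Nat.cast_nonneg (α := ℝ) M
    nlinarith

lemma c_bdd (a : H) : ∃ C, ∀ m, |c a m| ≤ C := by
  let N : Submodule ℚ H :=
    { carrier := {a | ∃ C, ∀ m, |c a m| ≤ C}
      zero_mem' := ⟨0, by simp⟩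
      add_mem' := by
        rintro a b ⟨C, hC⟩ ⟨D, hD⟩
        refine ⟨C + D, fun m => ?_⟩
        rw [map_add, Pi.add_apply]
        exact (abs_add_le _ _).trans (add_le_add (hC m) (hD m))
      smul_mem' := by
        rintro r a ⟨C, hC⟩
        refine ⟨|(r : ℝ)| * C, fun m => ?_⟩
        rw [map_smul, Pi.smul_apply, Rat.smul_def, abs_mul]
        exact mul_le_mul_of_nonneg_left (hC m) (abs_nonneg _) }
  refine mem_of_W N (fun l => ⟨2 ^ l.length, fun m => ?_⟩) a
  rw [c_W, abs_of_nonneg (cf_nonneg l m)]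
  exact cf_le l m

lemma bdd_summable {d : ℕ → ℝ} {C : ℝ} (h : ∀ m, |d m| ≤ C) {t : ℝ} (h0 : 0 ≤ t) (h1 : t < 1) :
    Summable fun m => ‖d m * t ^ m‖ := by
  refine Summable.of_nonneg_of_le (fun _ => norm_nonneg _) (fun m => ?_)
    ((summable_geometric_of_lt_one h0 h1).mul_left C)
  rw [norm_mul, Real.norm_eq_abs, norm_pow, Real.norm_eq_abs t, abs_of_nonneg h0]
  exact mul_le_mul_of_nonneg_right (h m) (by positivity)

lemma A_summable (a : H) {t : ℝ} (h0 : 0 ≤ t) (h1 : t < 1) : Summable fun m => ‖c a m * t ^ m‖ := by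
  obtain ⟨C, hC⟩ := c_bdd a
  exact bdd_summable hC h0 h1

noncomputable def A (t : ℝ) (a : H) : ℝ := ∑' m, c a m * t ^ m

lemma A_add {t : ℝ} (h0 : 0 ≤ t) (h1 : t < 1) (a b : H) : A t (a + b) = A t a + A t b := by
  rw [A, A, A, ← (A_summable a h0 h1).of_norm.tsum_add (A_summable b h0 h1).of_norm]
  refine tsum_congr fun m => ?_
  rw [map_add, Pi.add_apply]; ring

lemma A_smul {t : ℝ} (r : ℚ) (a : H) : A t (r • a) = r * A t a := by
  rw [A, A, ← tsum_mul_left]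
  refine tsum_congr fun m => ?_
  rw [map_smul, Pi.smul_apply, Rat.smul_def]; ring

lemma c_Yn (m : ℕ) : c Y m = 1 / m := by
  have : Y = Y * 1 := (mul_one _).symm
  rw [this, c_Y, s_one]

lemma A_Y {t : ℝ} (h0 : 0 ≤ t) (h1 : t < 1) : A t Y = - Real.log (1 - t) := by
  have h := Real.hasSum_pow_div_log_of_abs_lt_one (x := t) (by rw [abs_of_nonneg h0]; exact h1)
  rw [A, (A_summable Y h0 h1).of_norm.tsum_eq_zero_add, ← h.tsum_eq]
  simp only [c_Yn]
  simp [div_eq_inv_mul]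

lemma A_nsh {t : ℝ} (h0 : 0 ≤ t) (h1 : t < 1) {b : H} (hb : b ∈ H1) :
    A t (nshL Y b) = - Real.log (1 - t) * A t b := by
  rw [← A_Y h0 h1, A, A, A, tsum_mul_tsum_eq_tsum_sum_antidiagonal_of_summable_norm
    (A_summable Y h0 h1) (A_summable b h0 h1)]
  refine tsum_congr fun n => ?_
  rw [c_nsh hb, Finset.sum_mul]
  refine Finset.sum_congr rfl fun p hp => ?_
  rw [← Finset.HasAntidiagonal.mem_antidiagonal.1 hp, pow_add]; ring

/-! log bounds -/
noncomputable def lam (m : ℕ) : ℝ := 1 + Real.log m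

lemma one_le_lam (m : ℕ) : 1 ≤ lam m := by
  have := Real.log_natCast_nonneg m
  unfold lam; linarith

lemma lam_mono {m n : ℕ} (h : m ≤ n) : lam m ≤ lam n := by
  unfold lam
  rcases Nat.eq_zero_or_pos m with rfl | hm
  · simpa using Real.log_natCast_nonneg n
  · have : Real.log m ≤ Real.log n := Real.log_le_log (by positivity) (by exact_mod_cast h)
    linarith

lemma harm_le (M : ℕ) : ∑ i ∈ Finset.range (M + 1), (1 : ℝ) / i ≤ lam M := by
  have := harmonic_le_one_add_log M
  refine le_trans (le_of_eq ?_) this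
  rw [Finset.sum_range_succ', harmonic]
  push_cast
  simp

lemma s_W (M : ℕ) (l : List Letter) : s M (W l) = ∑ i ∈ Finset.range (M + 1), cf l i := by
  simp [s]

lemma s_le : ∀ (l : List Letter) (M : ℕ), s M (W l) ≤ lam M ^ l.length
  | [], M => by rw [W_nil, s_one]; simp
  | Letter.x :: l, M => by
    have h := s_le l M
    rw [s_W] at h ⊢
    have h2 : ∑ i ∈ Finset.range (M + 1), cf (Letter.x :: l) i ≤ ∑ i ∈ Finset.range (M + 1), cf l i := by
      refine Finset.sum_le_sum fun i _ => ?_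
      rw [cf]
      rcases Nat.eq_zero_or_pos i with rfl | hi
      · simpa using cf_nonneg l 0
      · exact div_le_self (cf_nonneg l i) (by exact_mod_cast hi)
    exact h2.trans (h.trans (pow_le_pow_right₀ (one_le_lam M) (by simp)))
  | Letter.y :: l, M => by
    rw [s_W]
    calc ∑ i ∈ Finset.range (M + 1), cf (Letter.y :: l) i 
        ≤ ∑ i ∈ Finset.range (M + 1), lam M ^ l.length * (1 / (i:ℝ)) := by
          refine Finset.sum_le_sum fun i hi => ?_
          rw [cf, ← s_W, div_eq_mul_one_div]
          refine mul_le_mul_of_nonneg_right ((s_le l i).trans ?_) (by positivity)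
          exact pow_le_pow_left₀ (by linarith [one_le_lam i]) (lam_mono (by simpa [Nat.lt_succ_iff] using hi)) _
      _ ≤ lam M ^ l.length * lam M := by
          rw [← Finset.mul_sum]
          exact mul_le_mul_of_nonneg_left (harm_le M) (pow_nonneg (by linarith [one_le_lam M]) _)
      _ = _ := by rw [List.length_cons, pow_succ]

lemma cf_le2 : ∀ (l : List Letter), Ey l → ∀ M : ℕ, cf l M ≤ lam M ^ l.length / M
  | [], h, _ => by obtain ⟨r, hr⟩ := h; simp at hr
  | Letter.x :: l, h, M => by
    rcases h.cases with ⟨h, -⟩ | h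
    · cases h
    have h2 := cf_le2 l h M
    rw [cf]
    rcases Nat.eq_zero_or_pos M with rfl | hM
    · simp
    · refine (div_le_self (cf_nonneg l M) (by exact_mod_cast hM)).trans (h2.trans ?_)
      refine div_le_div_of_nonneg_right (pow_le_pow_right₀ (one_le_lam M) (by simp)) (by positivity)
  | Letter.y :: l, h, M => by
    rw [cf, ← s_W]
    refine div_le_div_of_nonneg_right ((s_le l M).trans (pow_le_pow_right₀ (one_le_lam M) (by simp)))
      (by positivity)

lemma cf_le3 (l : List Letter) (h : Ey l) (M : ℕ) :
    cf (Letter.x :: l) M ≤ lam M ^ l.length / (M : ℝ) ^ 2 := by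
  rw [cf, pow_two, ← div_div]
  exact div_le_div_of_nonneg_right (cf_le2 l h M) (by positivity)

lemma lam_pow (n : ℕ) : ∃ C : ℝ, ∀ m : ℕ, lam m ^ n / (m : ℝ) ^ 2 ≤ C * (m : ℝ) ^ (-(3/2) : ℝ) := by
  set ε : ℝ := 1 / (2 * (n + 1)) with hε
  have hεp : 0 < ε := by positivity
  refine ⟨(1 + 1 / ε) ^ n, fun m => ?_⟩
  rcases Nat.eq_zero_or_pos m with rfl | hm
  · simp [Real.zero_rpow]
  have hm1 : (1 : ℝ) ≤ m := by exact_mod_cast hm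
  have hm0 : (0 : ℝ) < m := by linarith
  have h1 : lam m ≤ (1 + 1 / ε) * (m : ℝ) ^ ε := by
    have := Real.log_le_rpow_div hm0.le hεp
    have h2 := Real.one_le_rpow hm1 hεp.le
    unfold lam
    calc 1 + Real.log m ≤ (m : ℝ) ^ ε + (m : ℝ) ^ ε / ε := add_le_add h2 this
      _ = _ := by ring
  have h2 : lam m ^ n ≤ (1 + 1 / ε) ^ n * (m : ℝ) ^ (1 / 2 : ℝ) := by
    refine (pow_le_pow_left₀ (by linarith [one_le_lam m]) h1 n).trans ?_
    rw [mul_pow, ← Real.rpow_natCast ((m : ℝ) ^ ε), ← Real.rpow_mul hm0.le]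
    refine mul_le_mul_of_nonneg_left (Real.rpow_le_rpow_of_exponent_le hm1 ?_) (by positivity)
    rw [hε, one_div, inv_mul_le_iff₀ (by positivity)]
    linarith
  rw [div_le_iff₀ (by positivity), mul_assoc]
  refine h2.trans (le_of_eq ?_)
  congr 1
  rw [← Real.rpow_natCast, ← Real.rpow_add hm0]
  norm_num

lemma summable_lam (n : ℕ) : Summable fun m : ℕ => lam m ^ n / (m : ℝ) ^ 2 := by
  obtain ⟨C, hC⟩ := lam_pow n
  refine Summable.of_nonneg_of_le (fun m => ?_) hC
    ((Real.summable_nat_rpow.2 (by norm_num)).mul_left C)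
  have := one_le_lam m
  positivity

/-- tail decay -/
lemma tail_decay {d : ℕ → ℝ} {p : ℕ} (hd0 : ∀ m, 0 ≤ d m)
    (hd : ∀ m, d m ≤ lam m ^ p / (m : ℝ) ^ 2) {z : ℝ} (hz : HasSum d z) (n : ℕ) :
    Tendsto (fun M => (∑ i ∈ Finset.range (M + 1), d i - z) * lam M ^ n) atTop (𝓝 0) := by
  have hs : Summable fun m => d m * lam m ^ n := by
    refine Summable.of_nonneg_of_le (fun m => ?_) (fun m => ?_) (summable_lam (p + n))
    · exact mul_nonneg (hd0 m) (pow_nonneg (by linarith [one_le_lam m]) _)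
    · rw [pow_add, mul_div_right_comm]
      exact mul_le_mul_of_nonneg_right (hd m) (pow_nonneg (by linarith [one_le_lam m]) _)
  have ht : Tendsto (fun M => ∑' k, d (k + (M + 1)) * lam (k + (M + 1)) ^ n) atTop (𝓝 0) :=
    (tendsto_sum_nat_add fun m => d m * lam m ^ n).comp (tendsto_add_atTop_nat 1)
  refine squeeze_zero_norm (fun M => ?_) ht
  have h1 : ∑ i ∈ Finset.range (M + 1), d i - z = - ∑' k, d (k + (M + 1)) := by
    rw [← hz.tsum_eq, ← hz.summable.sum_add_tsum_nat_add (M + 1)]; ring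
  rw [h1, neg_mul, norm_neg, ← tsum_mul_right, Real.norm_eq_abs, abs_of_nonneg]
  · have hs1 : Summable fun k => d (k + (M + 1)) := (summable_nat_add_iff (M + 1)).2 hz.summable
    have hs2 : Summable fun k => d (k + (M + 1)) * lam (k + (M + 1)) ^ n :=
      (summable_nat_add_iff (f := fun m => d m * lam m ^ n) (M + 1)).2 hs
    refine Summable.tsum_le_tsum (fun k => ?_) (hs1.mul_right _) hs2
    · refine mul_le_mul_of_nonneg_left ?_ (hd0 _)
      exact pow_le_pow_left₀ (by linarith [one_le_lam M]) (lam_mono (by omega)) _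
  · exact tsum_nonneg fun k => mul_nonneg (hd0 _) (pow_nonneg (by linarith [one_le_lam M]) _)

lemma one_sub_pow_le {t : ℝ} (h0 : 0 ≤ t) (h1 : t < 1) (m : ℕ) :
    1 - t ^ m ≤ ((m : ℝ) * (1 - t)) ^ (1 / 4 : ℝ) := by
  have hb := one_add_mul_le_pow (a := t - 1) (by linarith) m
  rw [add_sub_cancel] at hb
  have hu : 0 ≤ (m : ℝ) * (1 - t) := mul_nonneg (by positivity) (by linarith)
  rcases le_total ((m : ℝ) * (1 - t)) 1 with h | h
  · have : 1 - t ^ m ≤ (m : ℝ) * (1 - t) := by linarith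
    refine this.trans ?_
    rcases hu.eq_or_lt with e | e
    · rw [← e]; simp
    nth_rw 1 [← Real.rpow_one ((m : ℝ) * (1 - t))]
    exact Real.rpow_le_rpow_of_exponent_ge e h (by norm_num)
  · have : 1 - t ^ m ≤ 1 := by linarith [pow_nonneg h0 m]
    exact this.trans (Real.one_le_rpow h (by norm_num))

lemma log_decay (k : ℕ) :
    Tendsto (fun t : ℝ => (1 - t) ^ (1 / 4 : ℝ) * |Real.log (1 - t)| ^ k) (𝓝[<] 1) (𝓝 0) := by
  have h := isLittleO_abs_log_rpow_rpow_nhdsGT_zero (s := -(1/4)) (k : ℝ) (by norm_num)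
  have h2 := h.tendsto_div_nhds_zero
  have h3 : Tendsto (fun t : ℝ => 1 - t) (𝓝[<] 1) (𝓝[>] 0) := by
    refine tendsto_nhdsWithin_iff.2 ⟨?_, ?_⟩
    · have : Tendsto (fun t : ℝ => 1 - t) (𝓝 1) (𝓝 (1 - 1)) := by
        exact (continuous_const.sub continuous_id).tendsto 1
      rw [sub_self] at this
      exact this.mono_left nhdsWithin_le_nhds
    · filter_upwards [self_mem_nhdsWithin] with t ht
      simpa using ht
  refine (h2.comp h3).congr' ?_
  filter_upwards [self_mem_nhdsWithin] with t ht
  have : 0 < 1 - t := by simpa using ht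
  simp only [Function.comp]
  rw [Real.rpow_neg this.le, div_inv_eq_mul, mul_comm, Real.rpow_natCast]

lemma ev_unit : ∀ᶠ t : ℝ in 𝓝[<] 1, 0 ≤ t ∧ t < 1 := by
  filter_upwards [self_mem_nhdsWithin, nhdsWithin_le_nhds (Ioi_mem_nhds (zero_lt_one' ℝ))] with t h1 h2
  exact ⟨le_of_lt h2, h1⟩

lemma abel_decay {d : ℕ → ℝ} {p : ℕ} (hd0 : ∀ m, 0 ≤ d m)
    (hd : ∀ m, d m ≤ lam m ^ p / (m : ℝ) ^ 2) {z : ℝ} (hz : HasSum d z) (n : ℕ) :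
    Tendsto (fun t : ℝ => (∑' m, d m * t ^ m - z) * (- Real.log (1 - t)) ^ n) (𝓝[<] 1) (𝓝 0) := by
  obtain ⟨C, hC⟩ := lam_pow p
  set K : ℝ := ∑' m : ℕ, C * (m : ℝ) ^ (-(5/4) : ℝ)
  have hK : Summable fun m : ℕ => C * (m : ℝ) ^ (-(5/4) : ℝ) :=
    (Real.summable_nat_rpow.2 (by norm_num)).mul_left C
  have hlim := (log_decay n).const_mul K
  rw [mul_zero] at hlim
  refine squeeze_zero_norm' ?_ hlim
  filter_upwards [ev_unit] with t ⟨h0, h1⟩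
  have hle : ∀ m, d m * t ^ m ≤ d m := fun m =>
    mul_le_of_le_one_right (hd0 m) (pow_le_one₀ h0 h1.le)
  have hs : Summable fun m => d m * t ^ m :=
    Summable.of_nonneg_of_le (fun m => mul_nonneg (hd0 m) (pow_nonneg h0 m)) hle hz.summable
  have hdiff : z - ∑' m, d m * t ^ m = ∑' m, (d m - d m * t ^ m) := by
    rw [hz.summable.tsum_sub hs, hz.tsum_eq]
  have hnn : 0 ≤ z - ∑' m, d m * t ^ m := by
    rw [hdiff]; exact tsum_nonneg fun m => by linarith [hle m]
  have hb : z - ∑' m, d m * t ^ m ≤ K * (1 - t) ^ (1 / 4 : ℝ) := by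
    rw [hdiff, ← tsum_mul_right]
    refine Summable.tsum_le_tsum (fun m => ?_) (hz.summable.sub hs) (hK.mul_right _)
    have e1 : d m - d m * t ^ m = d m * (1 - t ^ m) := by ring
    have e2 := one_sub_pow_le h0 h1 m
    have e3 : 0 ≤ 1 - t ^ m := by linarith [pow_le_one₀ (n := m) h0 h1.le]
    rw [Real.mul_rpow (by positivity) (by linarith)] at e2
    have e4 := (hd m).trans (hC m)
    rw [e1]
    refine (mul_le_mul e4 e2 e3 ((hd0 m).trans e4)).trans (le_of_eq ?_)
    rcases Nat.eq_zero_or_pos m with rfl | hm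
    · simp [Real.zero_rpow]
    have hm0 : (0 : ℝ) < m := by exact_mod_cast hm
    rw [mul_assoc, mul_assoc, ← mul_assoc ((m:ℝ) ^ _), ← Real.rpow_add hm0]
    norm_num
  rw [norm_mul, norm_pow, norm_neg, Real.norm_eq_abs, Real.norm_eq_abs, abs_sub_comm, abs_of_nonneg hnn,
    ← mul_assoc]
  exact mul_le_mul_of_nonneg_right hb (by positivity)

/-- weakly decreasing positive tuples bounded by `M` -/
def FS : (n : ℕ) → ℕ → Finset (Fin n → ℕ)
  | 0, _ => {Fin.elim0}
  | n + 1, M => (Finset.Icc 1 M).biUnion fun m => (FS n m).image fun f => (Fin.cons m f : Fin (n + 1) → ℕ)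

def WD {n : ℕ} (f : Fin n → ℕ) : Prop := (∀ i, 0 < f i) ∧ ∀ i j : Fin n, i ≤ j → f j ≤ f i

lemma mem_FS : ∀ (n M : ℕ) (f : Fin n → ℕ), f ∈ FS n M ↔ WD f ∧ ∀ i, f i ≤ M
  | 0, M, f => by
    simp only [FS, Finset.mem_singleton, WD]
    refine ⟨fun _ => ⟨⟨fun i => i.elim0, fun i => i.elim0⟩, fun i => i.elim0⟩, fun _ => funext fun i => i.elim0⟩
  | n + 1, M, f => by
    simp only [FS, Finset.mem_biUnion, Finset.mem_image, Finset.mem_Icc, WD]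
    constructor
    · rintro ⟨m, ⟨h1, hM⟩, f, hf, rfl⟩
      obtain ⟨⟨ha, hb⟩, hc⟩ := (mem_FS n m f).1 hf
      refine ⟨⟨fun i => ?_, fun i j hij => ?_⟩, fun i => ?_⟩
      · refine Fin.cases ?_ (fun i => ?_) i
        · simpa using Nat.lt_of_lt_of_le Nat.zero_lt_one h1
        · simpa using ha i
      · revert hij
        refine Fin.cases ?_ (fun i => ?_) i <;> refine Fin.cases ?_ (fun j => ?_) j
        · simp
        · intro _; simpa using hc j
        · intro h; simp at h
        · intro h; simpa using hb i j (by simpa using h)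
      · refine Fin.cases ?_ (fun i => ?_) i
        · simpa using hM
        · simpa using (hc i).trans hM
    · rintro ⟨⟨ha, hb⟩, hc⟩
      refine ⟨f 0, ⟨ha 0, hc 0⟩, Fin.tail f, (mem_FS n _ _).2 ⟨⟨fun i => ha _, fun i j h => hb _ _ ?_⟩, fun i => hb _ _ ?_⟩, Fin.cons_self_tail f⟩
      · simpa using h
      · simp

lemma sum_FS : ∀ (ks : List ℕ), Pos ks → ∀ M : ℕ,
    ∑ f ∈ FS ks.length M, ∏ i : Fin ks.length, ((f i : ℝ) ^ ks.get i)⁻¹ = s M (W (zl ks))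
  | [], _, M => by
    rw [zl_nil, W_nil, s_one]
    simp [FS]
  | k :: ks, hp, M => by
    have hk := hp.head
    rw [W_zl_cons, s_z k hk]
    have e : ∀ m, ∑ f ∈ (FS ks.length m).image fun f => (Fin.cons m f : Fin (ks.length + 1) → ℕ),
        ∏ i : Fin (ks.length + 1), ((f i : ℝ) ^ (k :: ks).get i)⁻¹ = s m (W (zl ks)) / (m : ℝ) ^ k := by
      intro m
      rw [Finset.sum_image (fun f _ g _ h => Fin.cons_right_injective (α := fun _ => ℕ) m h),
        ← sum_FS ks hp.tail m, Finset.sum_div]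
      refine Finset.sum_congr rfl fun f _ => ?_
      rw [Fin.prod_univ_succ]
      simp [div_eq_mul_inv, mul_comm]
    change ∑ f ∈ (Finset.Icc 1 M).biUnion _, _ = _
    rw [Finset.sum_biUnion]
    · refine (Finset.sum_congr rfl fun m _ => e m).trans ?_
      rw [Finset.range_eq_Ico, Finset.sum_eq_sum_Ico_succ_bot (by omega)]
      have : ((0 : ℕ) : ℝ) ^ k = 0 := by simp; omega
      rw [this, div_zero, zero_add]
      rfl
    · intro a _ b _ hab
      simp only [Function.onFun]
      rw [Finset.disjoint_left]
      intro f hf hg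
      obtain ⟨f1, -, rfl⟩ := Finset.mem_image.1 hf
      obtain ⟨f2, -, h⟩ := Finset.mem_image.1 hg
      exact hab (by simpa using (congrFun h 0).symm)

lemma nmzeta_eq (ks : List ℕ) (hp : Pos ks) {ζ : ℝ}
    (h : Tendsto (fun M => s M (W (zl ks))) atTop (𝓝 ζ)) (hb : ∀ M, s M (W (zl ks)) ≤ ζ) :
    nmzeta ks = ζ := by
  classical
  let P : (Fin ks.length → ℕ) → Prop := fun f => (∀ i, 0 < f i) ∧
      ∀ i j : Fin ks.length, i ≤ j → f j ≤ f i
  let G : {f : Fin ks.length → ℕ // P f} → ℝ := fun m => ∏ i : Fin ks.length, ((m.1 i : ℝ) ^ ks.get i)⁻¹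
  let U : ℕ → Finset {f : Fin ks.length → ℕ // P f} := fun M => (FS ks.length M).subtype P
  have hU : ∀ M, ∑ f ∈ U M, G f = s M (W (zl ks)) := by
    intro M
    rw [← sum_FS ks hp M]
    exact Finset.sum_subtype_of_mem (p := P) (fun f : Fin ks.length → ℕ => ∏ i : Fin ks.length, ((f i : ℝ) ^ ks.get i)⁻¹) 
      (fun f hf => ((mem_FS _ _ f).1 hf).1)
  have ht : Tendsto U atTop atTop := by
    refine tendsto_atTop_finset_of_monotone (fun M N hMN f hf => ?_) fun f => ?_
    · rw [Finset.mem_subtype, mem_FS] at hf ⊢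
      exact ⟨hf.1, fun i => (hf.2 i).trans hMN⟩
    · refine ⟨∑ i, f.1 i, ?_⟩
      rw [Finset.mem_subtype, mem_FS]
      exact ⟨f.2, fun i => Finset.single_le_sum (f := f.1) (fun _ _ => Nat.zero_le _) (Finset.mem_univ i)⟩
  have hG0 : ∀ f, 0 ≤ G f := fun f => Finset.prod_nonneg fun i _ => by positivity
  have hG : Summable G := by
    refine summable_of_sum_le hG0 (c := ζ) fun u => ?_
    obtain ⟨M, hM⟩ := (tendsto_atTop.1 ht u).exists
    refine (Finset.sum_le_sum_of_subset_of_nonneg hM fun f _ _ => hG0 f).trans ?_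
    rw [hU]; exact hb M
  have h2 := (hG.hasSum : Tendsto _ _ _).comp ht
  refine tendsto_nhds_unique (h2.congr fun M => ?_) h
  exact hU M

lemma ZL_one : ZL 1 = 1 := by
  have h : nmzeta [] = 1 := by
    refine nmzeta_eq [] (by simp [Pos]) ?_ ?_
    · simp [zl_nil, W_nil, s_one]
    · simp [zl_nil, W_nil, s_one]
  rw [← W_nil, ZL, linext_W]
  exact h

lemma ZL_W (l : List Letter) (hl : Ey l) : HasSum (cf (Letter.x :: l)) (ZL (W (Letter.x :: l))) := by
  have hs : Summable (cf (Letter.x :: l)) :=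
    Summable.of_nonneg_of_le (cf_nonneg _) (cf_le3 l hl) (summable_lam _)
  obtain ⟨r, rfl⟩ := hl
  obtain ⟨k, ks, hk, hp, e⟩ := exists_ks0 r
  have hz : ZL (W (Letter.x :: (r ++ [Letter.y]))) = nmzeta (k :: ks) := by
    rw [ZL, linext_W, e, toZ_zl _ (hp.cons (by omega))]
  rw [hz, nmzeta_eq (k :: ks) (hp.cons (by omega)) (ζ := ∑' m, cf (Letter.x :: (r ++ [Letter.y])) m)]
  · exact hs.hasSum
  · rw [← e]
    simp only [s_W]
    exact hs.hasSum.tendsto_sum_nat.comp (tendsto_add_atTop_nat 1)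
  · intro M
    rw [← e, s_W]
    exact hs.sum_le_tsum _ fun i _ => cf_nonneg _ i

lemma s_decay {a : H} (ha : a ∈ H0) :
    ∀ n : ℕ, Tendsto (fun M => (s M a - ZL a) * lam M ^ n) atTop (𝓝 0) := by
  let N : Submodule ℚ H :=
    { carrier := {a | ∀ n : ℕ, Tendsto (fun M => (s M a - ZL a) * lam M ^ n) atTop (𝓝 0)}
      zero_mem' := by intro n; simp
      add_mem' := by
        intro a b ha hb n
        have := (ha n).add (hb n)
        rw [add_zero] at this
        refine this.congr fun M => ?_
        rw [map_add, map_add]; ring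
      smul_mem' := by
        intro r a ha n
        have := (ha n).const_mul (r : ℝ)
        rw [mul_zero] at this
        refine this.congr fun M => ?_
        rw [map_smul, map_smul, Rat.smul_def, Rat.smul_def]; ring }
  refine (H0_le N ?_ fun l n => ?_) ha
  · intro n
    simp [s_one, ZL_one]
  · have hl : Ey (l ++ [Letter.y]) := ⟨l, rfl⟩
    simp only [s_W]
    exact tail_decay (cf_nonneg _) (cf_le3 _ hl) (ZL_W _ hl) n

lemma A_W (t : ℝ) (l : List Letter) : A t (W l) = ∑' m, cf l m * t ^ m := by
  rw [A, c_W]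

lemma A_one (t : ℝ) : A t 1 = 1 := by
  rw [← W_nil, A_W, tsum_eq_single 0]
  · simp [cf]
  · intro m hm; simp [cf, hm]

lemma A_decay {a : H} (ha : a ∈ H0) :
    ∀ n : ℕ, Tendsto (fun t => (A t a - ZL a) * (- Real.log (1 - t)) ^ n) (𝓝[<] 1) (𝓝 0) := by
  let N : Submodule ℚ H :=
    { carrier := {a | ∀ n : ℕ, Tendsto (fun t => (A t a - ZL a) * (- Real.log (1 - t)) ^ n) (𝓝[<] 1) (𝓝 0)}
      zero_mem' := by intro n; simp [A]
      add_mem' := by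
        intro a b ha hb n
        have := (ha n).add (hb n)
        rw [add_zero] at this
        refine this.congr' ?_
        filter_upwards [ev_unit] with t ⟨h0, h1⟩
        rw [map_add, A_add h0 h1]; ring
      smul_mem' := by
        intro r a ha n
        have := (ha n).const_mul (r : ℝ)
        rw [mul_zero] at this
        refine this.congr fun M => ?_
        rw [map_smul, A_smul, Rat.smul_def]; ring }
  refine (H0_le N ?_ fun l n => ?_) ha
  · intro n
    simp [A_one, ZL_one]
  · have hl : Ey (l ++ [Letter.y]) := ⟨l, rfl⟩
    simp only [A_W]
    exact abel_decay (cf_nonneg _) (cf_le3 _ hl) (ZL_W _ hl) n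

lemma poly_zero {ι : Type*} {l : Filter ι} [l.NeBot] {u : ι → ℝ} (hu : Tendsto u l atTop)
    (P : Polynomial ℝ) (h : Tendsto (fun t => P.eval (u t)) l (𝓝 0)) : P = 0 := by
  rcases lt_or_ge 0 P.degree with hd | hd
  · have h1 := (P.abs_tendsto_atTop hd).comp hu
    exact absurd h.abs (not_tendsto_nhds_of_tendsto_atTop h1 _)
  · rw [Polynomial.eq_C_of_degree_le_zero hd] at h ⊢
    simp only [Polynomial.eval_C] at h
    rw [tendsto_nhds_unique tendsto_const_nhds h, Polynomial.C_0]

lemma L_atTop : Tendsto (fun t : ℝ => - Real.log (1 - t)) (𝓝[<] 1) atTop := by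
  have h3 : Tendsto (fun t : ℝ => 1 - t) (𝓝[<] 1) (𝓝[>] 0) := by
    refine tendsto_nhdsWithin_iff.2 ⟨?_, ?_⟩
    · have : Tendsto (fun t : ℝ => 1 - t) (𝓝 1) (𝓝 (1 - 1)) := by
        exact (continuous_const.sub continuous_id).tendsto 1
      rw [sub_self] at this
      exact this.mono_left nhdsWithin_le_nhds
    · filter_upwards [self_mem_nhdsWithin] with t ht
      simpa using ht
  exact tendsto_neg_atBot_atTop.comp (Real.tendsto_log_nhdsGT_zero.comp h3)

lemma sY (M : ℕ) : s M Y = ∑ i ∈ Finset.range (M + 1), (1 : ℝ) / i := by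
  rw [s_eq]; exact Finset.sum_congr rfl fun i _ => c_Yn i

lemma sY_atTop : Tendsto (fun M => s M Y) atTop atTop := by
  refine Real.tendsto_sum_range_one_div_nat_succ_atTop.congr fun M => ?_
  rw [sY, Finset.sum_range_succ']
  simp

lemma sY_nonneg (M : ℕ) : 0 ≤ s M Y := by
  rw [sY]; exact Finset.sum_nonneg fun i _ => by positivity

lemma s_growth (a : H) : ∃ C : ℝ, ∃ n : ℕ, 0 ≤ C ∧ ∀ M, |s M a| ≤ C * lam M ^ n := by
  let N : Submodule ℚ H :=
    { carrier := {a | ∃ C : ℝ, ∃ n : ℕ, 0 ≤ C ∧ ∀ M, |s M a| ≤ C * lam M ^ n}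
      zero_mem' := ⟨0, 0, le_rfl, by simp⟩
      add_mem' := by
        rintro a b ⟨C, n, hC0, hC⟩ ⟨D, m, hD0, hD⟩
        refine ⟨C + D, n + m, by positivity, fun M => ?_⟩
        rw [map_add, add_mul]
        refine (abs_add_le _ _).trans (add_le_add ((hC M).trans ?_) ((hD M).trans ?_))
        · exact mul_le_mul_of_nonneg_left (pow_le_pow_right₀ (one_le_lam M) (by omega)) hC0
        · exact mul_le_mul_of_nonneg_left (pow_le_pow_right₀ (one_le_lam M) (by omega)) hD0
      smul_mem' := by
        rintro r a ⟨C, n, hC0, hC⟩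
        refine ⟨|(r : ℝ)| * C, n, by positivity, fun M => ?_⟩
        rw [map_smul, Rat.smul_def, abs_mul, mul_assoc]
        exact mul_le_mul_of_nonneg_left (hC M) (abs_nonneg _) }
  refine mem_of_W N (fun l => ⟨1, l.length, zero_le_one, fun M => ?_⟩) a
  rw [one_mul, abs_of_nonneg]
  · exact s_le l M
  · rw [s_W]; exact Finset.sum_nonneg fun i _ => cf_nonneg l i

lemma asympt_g {g : H →ₗ[ℚ] Polynomial ℝ} (hg : IsRegHom nsh Zbar g) {a : H} (ha : a ∈ H1) :
    ∀ n : ℕ, Tendsto (fun t => (A t a - (g a).eval (- Real.log (1 - t))) * (- Real.log (1 - t)) ^ n)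
      (𝓝[<] 1) (𝓝 0) := by
  let N : Submodule ℚ H :=
    { carrier := {a | ∀ n : ℕ, Tendsto (fun t => (A t a - (g a).eval (- Real.log (1 - t))) *
        (- Real.log (1 - t)) ^ n) (𝓝[<] 1) (𝓝 0)}
      zero_mem' := by intro n; simp [A]
      add_mem' := by
        intro a b ha hb n
        have := (ha n).add (hb n)
        rw [add_zero] at this
        refine this.congr' ?_
        filter_upwards [ev_unit] with t ⟨h0, h1⟩
        rw [map_add, A_add h0 h1, Polynomial.eval_add]; ring
      smul_mem' := by
        intro r a ha n
        have := (ha n).const_mul (r : ℝ)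
        rw [mul_zero] at this
        refine this.congr fun t => ?_
        rw [map_smul, A_smul, Polynomial.eval_smul, Rat.smul_def]; ring }
  refine (gen (nshL Y) nsh_h0 nsh_h1 N ?_ ?_) ha
  · intro b hb n
    rw [hg.2.1 b hb, Zbar_eq]
    simp only [Polynomial.eval_C]
    exact A_decay hb n
  · intro b hb hbN n
    have hY : Y ∈ H1 := by
      have := Hy_le_H1 (mulY_mem_Hy 1)
      rwa [one_mul] at this
    have e : g (nshL Y b) = Polynomial.X * g b := by
      rw [← nsh_eq, hg.1 Y hY b hb, hg.2.2]
    refine (hbN (n + 1)).congr' ?_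
    filter_upwards [ev_unit] with t ⟨h0, h1⟩
    rw [A_nsh h0 h1 hb, e, Polynomial.eval_mul, Polynomial.eval_X]; ring

lemma asympt_f {f : H →ₗ[ℚ] Polynomial ℝ} (hf : IsRegHom nharm Zbar f) {a : H} (ha : a ∈ H1) :
    ∀ n : ℕ, Tendsto (fun M => (s M a - (f a).eval (s M Y)) * (s M Y) ^ n) atTop (𝓝 0) := by
  let N : Submodule ℚ H :=
    { carrier := {a | ∀ n : ℕ, Tendsto (fun M => (s M a - (f a).eval (s M Y)) * (s M Y) ^ n) atTop (𝓝 0)}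
      zero_mem' := by intro n; simp
      add_mem' := by
        intro a b ha hb n
        have := (ha n).add (hb n)
        rw [add_zero] at this
        refine this.congr fun M => ?_
        rw [map_add, map_add, Polynomial.eval_add]; ring
      smul_mem' := by
        intro r a ha n
        have := (ha n).const_mul (r : ℝ)
        rw [mul_zero] at this
        refine this.congr fun t => ?_
        rw [map_smul, map_smul, Polynomial.eval_smul, Rat.smul_def, Rat.smul_def]; ring }
  have hY : Y ∈ H1 := by
    have := Hy_le_H1 (mulY_mem_Hy 1)
    rwa [one_mul] at this
  refine (gen (nharmL Y) nharm_h0 nharm_h1 N ?_ ?_) ha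
  · intro b hb n
    rw [hf.2.1 b hb, Zbar_eq]
    simp only [Polynomial.eval_C]
    refine squeeze_zero_norm (fun M => ?_) (tendsto_zero_iff_norm_tendsto_zero.1 (s_decay hb n))
    rw [norm_mul, norm_mul]
    refine mul_le_mul_of_nonneg_left ?_ (norm_nonneg _)
    rw [Real.norm_of_nonneg (pow_nonneg (sY_nonneg M) n),
      Real.norm_of_nonneg (pow_nonneg (by linarith [one_le_lam M]) n)]
    exact pow_le_pow_left₀ (sY_nonneg M) ((sY M).le.trans (harm_le M)) n
  · intro b hb hbN n
    have e : f (nharmL Y b) = Polynomial.X * f b := by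
      rw [← nharm_eq, hf.1 Y hY b hb, hf.2.2]
    refine (hbN (n + 1)).congr fun M => ?_
    rw [s_nharm hY hb, e, Polynomial.eval_mul, Polynomial.eval_X]; ring

lemma harm_diff {w1 w2 : H} (h1 : w1 ∈ H1) (h2 : w2 ∈ H0) :
    Tendsto (fun t => A t (nharmL w1 w2) - ZL w2 * A t w1) (𝓝[<] 1) (𝓝 0) := by
  obtain ⟨C, n, hC0, hC⟩ := s_growth w1
  have hlim : Tendsto (fun M => s M w1 * (s M w2 - ZL w2)) atTop (𝓝 0) := by
    have := (tendsto_zero_iff_norm_tendsto_zero.1 (s_decay h2 n)).const_mul C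
    rw [mul_zero] at this
    refine squeeze_zero_norm (fun M => ?_) this
    rw [norm_mul, norm_mul, mul_comm ‖s M w2 - ZL w2‖, ← mul_assoc]
    refine mul_le_mul_of_nonneg_right ?_ (norm_nonneg _)
    rw [Real.norm_of_nonneg (pow_nonneg (by linarith [one_le_lam M]) n)]
    exact hC M
  have hlim2 : Tendsto (fun n => ∑ i ∈ Finset.range n, (c (nharmL w1 w2) i - ZL w2 * c w1 i)) atTop (𝓝 0) := by
    refine (tendsto_add_atTop_iff_nat 1).1 (hlim.congr fun M => ?_)
    rw [Finset.sum_sub_distrib, ← Finset.mul_sum, ← s_eq, ← s_eq, s_nharm h1 (H0_le_H1 h2)]; ring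
  refine (Real.tendsto_tsum_powerSeries_nhdsWithin_lt hlim2).congr' ?_
  filter_upwards [ev_unit] with t ⟨h0, h1⟩
  rw [A, A, ← tsum_mul_left, ← (A_summable _ h0 h1).of_norm.tsum_sub ((A_summable _ h0 h1).of_norm.mul_left _)]
  exact tsum_congr fun m => by ring

lemma abel_atTop {d : ℕ → ℝ} {C : ℝ} (hd : ∀ m, |d m| ≤ C)
    (hS : Tendsto (fun M => ∑ i ∈ Finset.range (M + 1), d i) atTop atTop)
    (h : Tendsto (fun t : ℝ => ∑' m, d m * t ^ m) (𝓝[<] 1) (𝓝 0)) : False := by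
  obtain ⟨N, hN⟩ := eventually_atTop.1 (hS.eventually_ge_atTop 1)
  set S : ℕ → ℝ := fun M => ∑ i ∈ Finset.range (M + 1), d i with hSd
  let q : ℕ → ℝ := fun M => if M < N then S M - 1 else 0
  have hlow : ∀ᶠ t : ℝ in 𝓝[<] 1, 1 + (1 - t) * ∑ M ∈ Finset.range N, q M * t ^ M ≤ ∑' m, d m * t ^ m := by
    filter_upwards [ev_unit] with t ⟨h0, h1⟩
    have hs1 := bdd_summable hd h0 h1
    have hs2 : Summable fun m : ℕ => ‖t ^ m‖ := by
      simpa using summable_geometric_of_lt_one (abs_nonneg t) (by rwa [abs_of_nonneg h0])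
    have e : ∀ n, ∑ k ∈ Finset.range (n + 1), d k * t ^ k * t ^ (n - k) = S n * t ^ n := by
      intro n
      rw [hSd, Finset.sum_mul]
      refine Finset.sum_congr rfl fun k hk => ?_
      rw [mul_assoc, ← pow_add, Nat.add_sub_cancel' (by simpa [Nat.lt_succ_iff] using hk)]
    have hprod := tsum_mul_tsum_eq_tsum_sum_range_of_summable_norm hs1 hs2
    have hsum := (summable_norm_sum_mul_range_of_summable_norm hs1 hs2).of_norm
    simp only [e] at hprod hsum
    rw [tsum_geometric_of_lt_one h0 h1] at hprod
    have hq : Summable fun M => q M * t ^ M :=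
      summable_of_ne_finset_zero (s := Finset.range N) fun M hM => by
        have : ¬ M < N := by simpa using hM
        simp [q, this]
    have hqs : ∑' M, q M * t ^ M = ∑ M ∈ Finset.range N, q M * t ^ M :=
      tsum_eq_sum fun M hM => by
        have : ¬ M < N := by simpa using hM
        simp [q, this]
    have hle : ∑' M, (t ^ M + q M * t ^ M) ≤ ∑' M, S M * t ^ M := by
      refine Summable.tsum_le_tsum (fun M => ?_) (hs2.of_norm.add hq) hsum
      have ht := pow_nonneg h0 M
      simp only [q]
      split_ifs with hM
      · linarith
      · have := hN M (by omega)
        nlinarith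
    rw [hs2.of_norm.tsum_add hq, hqs, tsum_geometric_of_lt_one h0 h1, ← hprod] at hle
    have hp : 0 < 1 - t := by linarith
    have := mul_le_mul_of_nonneg_left hle hp.le
    rw [mul_add, mul_inv_cancel₀ hp.ne', mul_comm (∑' m, d m * t ^ m), ← mul_assoc,
      mul_inv_cancel₀ hp.ne', one_mul] at this
    exact this
  have hl : Tendsto (fun t : ℝ => 1 + (1 - t) * ∑ M ∈ Finset.range N, q M * t ^ M) (𝓝[<] 1) (𝓝 1) := by
    have hc : Continuous fun t : ℝ => 1 + (1 - t) * ∑ M ∈ Finset.range N, q M * t ^ M := by fun_prop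
    have := hc.tendsto 1
    simp only [sub_self, zero_mul, add_zero] at this
    exact this.mono_left nhdsWithin_le_nhds
  have := le_of_tendsto_of_tendsto hl h hlow
  linarith

lemma A_sub {t : ℝ} (h0 : 0 ≤ t) (h1 : t < 1) (a b : H) : A t (a - b) = A t a - A t b := by
  have := A_add h0 h1 (a - b) b
  rw [sub_add_cancel] at this; linarith

lemma A_neg (t : ℝ) (a : H) : A t (-a) = - A t a := by
  have := A_smul (t := t) (-1) a
  simpa using this

lemma f_zero {f : H →ₗ[ℚ] Polynomial ℝ} (hf : IsRegHom nharm Zbar f) {D : H} (hD : D ∈ H1)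
    (h : Tendsto (fun t => A t D) (𝓝[<] 1) (𝓝 0)) : f D = 0 := by
  have key : ∀ D ∈ H1, Tendsto (fun t => A t D) (𝓝[<] 1) (𝓝 0) → 0 < (f D).degree →
      0 ≤ (f D).leadingCoeff → False := by
    intro D hD h hdeg hlc
    have h1 := ((f D).tendsto_atTop_of_leadingCoeff_nonneg hdeg hlc).comp sY_atTop
    have h2 := asympt_f hf hD 0
    simp only [pow_zero, mul_one] at h2
    have h3 := h2.add_atTop h1
    obtain ⟨C, hC⟩ := c_bdd D
    refine abel_atTop hC (h3.congr fun M => ?_) h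
    rw [← s_eq]; simp
  rcases lt_or_ge 0 (f D).degree with hd | hd
  · exfalso
    rcases le_total 0 (f D).leadingCoeff with hl | hl
    · exact key D hD h hd hl
    · refine key (-D) (neg_mem hD) ?_ (by rwa [map_neg, Polynomial.degree_neg]) ?_
      · simp only [A_neg]
        simpa using h.neg
      · rw [map_neg, Polynomial.leadingCoeff_neg]; linarith
  · have h2 := asympt_f hf hD 0
    rw [Polynomial.eq_C_of_degree_le_zero hd] at h2 ⊢
    simp only [pow_zero, mul_one, Polynomial.eval_C] at h2
    have h3 : Tendsto (fun n => ∑ i ∈ Finset.range n, c D i) atTop (𝓝 ((f D).coeff 0)) := by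
      have h4 := h2.add_const ((f D).coeff 0)
      rw [zero_add] at h4
      refine (tendsto_add_atTop_iff_nat 1).1 (h4.congr fun M => ?_)
      rw [← s_eq]; ring
    have h5 := Real.tendsto_tsum_powerSeries_nhdsWithin_lt h3
    rw [tendsto_nhds_unique h5 h, Polynomial.C_0]

lemma g_zero {g : H →ₗ[ℚ] Polynomial ℝ} (hg : IsRegHom nsh Zbar g) {w1 w2 : H} (h1 : w1 ∈ H1)
    (h2 : w2 ∈ H0) : g (nsh w1 w2 - nharm w1 w2) = 0 := by
  have e : g (nsh w1 w2) = g w1 * Polynomial.C (ZL w2) := by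
    rw [hg.1 w1 h1 w2 (H0_le_H1 h2), hg.2.1 w2 h2, Zbar_eq]
  rw [map_sub, e, nharm_eq]
  refine poly_zero L_atTop _ ?_
  have k1 := asympt_g hg h1 0
  have k2 := asympt_g hg (nharmL_mem w1 h1 w2 (H0_le_H1 h2)) 0
  have := (k2.sub (k1.const_mul (ZL w2))).sub (harm_diff h1 h2)
  simp only [mul_zero, sub_zero] at this
  refine this.congr fun t => ?_
  rw [Polynomial.eval_sub, Polynomial.eval_mul, Polynomial.eval_C]; ring

lemma main {f g : H →ₗ[ℚ] Polynomial ℝ} (hf : IsRegHom nharm Zbar f) (hg : IsRegHom nsh Zbar g)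
    {w1 w2 : H} (h1 : w1 ∈ H1) (h2 : w2 ∈ H0) :
    f (nsh w1 w2 - nharm w1 w2) = 0 ∧ g (nsh w1 w2 - nharm w1 w2) = 0 := by
  have hgz := g_zero hg h1 h2
  have hD : nsh w1 w2 - nharm w1 w2 ∈ H1 := by
    rw [nsh_eq, nharm_eq]
    exact sub_mem (nshL_mem w1 h1 w2 (H0_le_H1 h2)) (nharmL_mem w1 h1 w2 (H0_le_H1 h2))
  refine ⟨f_zero hf hD ?_, hgz⟩
  have k := asympt_g hg hD 0
  rw [hgz] at k
  simpa using k

end EDS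

end

/-- Extended double shuffle relations for non-strict multiple zeta values:
if `Z̄^{*̄}` and `Z̄^{ш̄}` are the ℚ-algebra homomorphisms `(H¹, *̄) → ℝ[T]` resp.
`(H¹, ш̄) → ℝ[T]` extending `Z̄` and sending `y` to `T`, then for all `w₁ ∈ H¹`
and `w₂ ∈ H⁰` one has `Z̄^{*̄}(w₁ ш̄ w₂ − w₁ *̄ w₂) = 0` and
`Z̄^{ш̄}(w₁ ш̄ w₂ − w₁ *̄ w₂) = 0`. -/
theorem extended_double_shuffle (f g : H →ₗ[ℚ] Polynomial ℝ)
    (hf : IsRegHom nharm Zbar f) (hg : IsRegHom nsh Zbar g) :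
    ∀ w1 ∈ H1, ∀ w2 ∈ H0,
      f (nsh w1 w2 - nharm w1 w2) = 0 ∧ g (nsh w1 w2 - nharm w1 w2) = 0 := by
  intro w1 h1 w2 h2
  exact EDS.main hf hg h1 h2
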